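/- There exists a universal constant c > 0 such that for every n-qubit mixed state ρ and every γ > 0: if 4^n · Σ_{x ∈ 𝔽₂^{2n}} p_ρ(x)³ ≥ γ, then the stabilizer fidelity satisfies F(ρ) ≥ c · γ^{1089}. -/

import Mathlib

open scoped BigOperators ComplexOrder

/-- The phase space `𝔽₂^{2n}`, written as pairs `(a, b)` with `a, b ∈ 𝔽₂ⁿ`. -/
abbrev PhaseSpace (n : ℕ) := (Fin n → ZMod 2) × (Fin n → ZMod 2)

/-- The symplectic product `[x, y] = a·d + b·c` for `x = (a,b)`, `y = (c,d)`. -/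
def sympl {n : ℕ} (x y : PhaseSpace n) : ZMod 2 :=
  ∑ i, x.1 i * y.2 i + ∑ i, x.2 i * y.1 i

/-- The symplectic Fourier transform `f̂(a) = 4^{-n} ∑_x (-1)^{[a,x]} f(x)`. -/
noncomputable def sft {n : ℕ} (f : PhaseSpace n → ℝ) (a : PhaseSpace n) : ℝ :=
  (1 / 4 ^ n) * ∑ x, (-1 : ℝ) ^ (sympl a x).val * f x

/-- The symplectic complement of a set `S ⊆ 𝔽₂^{2n}`. -/
def symplComplement {n : ℕ} (S : Set (PhaseSpace n)) : Set (PhaseSpace n) :=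
  {x | ∀ a ∈ S, sympl x a = 0}

/-- The Weyl operator `W_x = i^{a·b} X^a Z^b` for `x = (a,b)`, as a `2^n × 2^n` matrix
indexed by `𝔽₂ⁿ`: `(W_x)_{k,j} = i^{a·b} (-1)^{b·j} [k = j + a]`. -/
noncomputable def Weyl {n : ℕ} (x : PhaseSpace n) :
    Matrix (Fin n → ZMod 2) (Fin n → ZMod 2) ℂ :=
  fun k j => Complex.I ^ (∑ i, (x.1 i).val * (x.2 i).val) *
    (if k = j + x.1 then (-1 : ℂ) ^ (∑ i, (x.2 i).val * (j i).val) else 0)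

/-- `p_H(x) = 2^{-n} tr(W_x H)²` (the trace is real for Hermitian `H`). -/
noncomputable def pFun {n : ℕ} (H : Matrix (Fin n → ZMod 2) (Fin n → ZMod 2) ℂ)
    (x : PhaseSpace n) : ℝ :=
  ((Weyl x * H).trace.re) ^ 2 / 2 ^ n

/-- A set is Lagrangian if it equals its symplectic complement. -/
def IsLagrangian {n : ℕ} (S : Set (PhaseSpace n)) : Prop :=
  S = symplComplement S

/-- The outer product `|φ⟩⟨φ|` of a vector `φ ∈ ℂ^{2^n}`. -/
noncomputable def outer {n : ℕ} (φ : (Fin n → ZMod 2) → ℂ) :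
    Matrix (Fin n → ZMod 2) (Fin n → ZMod 2) ℂ :=
  Matrix.vecMulVec φ (fun j => starRingEnd ℂ (φ j))

/-- `Weyl(σ) = {x : tr(W_x σ) = ±1}`. -/
def weylSet {n : ℕ} (σ : Matrix (Fin n → ZMod 2) (Fin n → ZMod 2) ℂ) :
    Set (PhaseSpace n) :=
  {x | (Weyl x * σ).trace = 1 ∨ (Weyl x * σ).trace = -1}

/-- A unit vector `φ` is a stabilizer state iff `Weyl(|φ⟩⟨φ|)` is Lagrangian. -/
def IsStabilizerState {n : ℕ} (φ : (Fin n → ZMod 2) → ℂ) : Prop :=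
  (∑ j, Complex.normSq (φ j)) = 1 ∧ IsLagrangian (weylSet (outer φ))

/-- The stabilizer fidelity `F(ρ) = max_{stabilizer |φ⟩} ⟨φ|ρ|φ⟩ = max tr(ρ|φ⟩⟨φ|)`. -/
noncomputable def stabFidelity {n : ℕ}
    (ρ : Matrix (Fin n → ZMod 2) (Fin n → ZMod 2) ℂ) : ℝ :=
  ⨆ φ : {φ : (Fin n → ZMod 2) → ℂ // IsStabilizerState φ}, ((ρ * outer φ.1).trace).re

section part1
open Finset Real
set_option linter.unusedSectionVars false

/-- probability mass function -/
structure IsP {α : Type} [Fintype α] (p : α → ℝ) : Prop where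
  nonneg : ∀ a, 0 ≤ p a
  sum : ∑ a, p a = 1

noncomputable def ent {α : Type} [Fintype α] (p : α → ℝ) : ℝ := ∑ a, negMulLog (p a)

open scoped Classical in
noncomputable def push {Ω α : Type} [Fintype Ω] (p : Ω → ℝ) (X : Ω → α) (a : α) : ℝ :=
  ∑ ω, if X ω = a then p ω else 0

noncomputable def HH {Ω α : Type} [Fintype Ω] [Fintype α] (p : Ω → ℝ) (X : Ω → α) : ℝ :=
  ent (push p X)

section basics
variable {Ω Ω' α β γ : Type} [Fintype Ω] [Fintype Ω'] [Fintype α] [Fintype β] [Fintype γ]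
variable {p : Ω → ℝ}

lemma push_sum_mul (p : Ω → ℝ) (X : Ω → α) (g : α → ℝ) :
    ∑ a, push p X a * g a = ∑ ω, p ω * g (X ω) := by
  classical
  simp only [push, Finset.sum_mul]
  rw [Finset.sum_comm]
  refine Finset.sum_congr rfl fun ω _ => ?_
  rw [Finset.sum_eq_single (X ω)]
  · simp
  · intro b _ hb; simp [Ne.symm hb]
  · simp

lemma push_nonneg (hp : IsP p) (X : Ω → α) (a : α) : 0 ≤ push p X a := by
  classical
  exact Finset.sum_nonneg fun ω _ => by split_ifs <;> simp [hp.nonneg]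

lemma push_isP (hp : IsP p) (X : Ω → α) : IsP (push p X) := by
  refine ⟨push_nonneg hp X, ?_⟩
  have := push_sum_mul p X (fun _ => 1)
  simpa [hp.sum] using this

lemma push_push (p : Ω → ℝ) (X : Ω → α) (f : α → β) :
    push (push p X) f = push p (fun ω => f (X ω)) := by
  classical
  funext b
  have := push_sum_mul p X (fun a => if f a = b then 1 else 0)
  simpa [push] using this

lemma HH_push (p : Ω → ℝ) (X : Ω → α) (f : α → β) :
    HH (push p X) f = HH p (fun ω => f (X ω)) := by
  simp [HH, push_push]

lemma push_id (p : Ω → ℝ) : push p (fun ω => ω) = p := by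
  classical
  funext a; simp [push]

lemma HH_id (p : Ω → ℝ) : HH p (fun ω => ω) = ent p := by
  simp [HH, push_id]

lemma le_push (hp : IsP p) (X : Ω → α) (ω : Ω) : p ω ≤ push p X (X ω) := by
  classical
  unfold push
  have := Finset.single_le_sum (f := fun ω' => if X ω' = X ω then p ω' else 0)
    (fun i _ => by split_ifs <;> simp [hp.nonneg]) (Finset.mem_univ ω)
  simpa using this

lemma HH_eq (p : Ω → ℝ) (X : Ω → α) :
    HH p X = -∑ ω, p ω * log (push p X (X ω)) := by
  have := push_sum_mul p X (fun a => log (push p X a))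
  rw [← this, HH, ent, ← Finset.sum_neg_distrib]
  simp [negMulLog]

lemma HH_congr {X : Ω → α} {Y : Ω → β} (h : ∀ ω ω', X ω = X ω' ↔ Y ω = Y ω') :
    HH p X = HH p Y := by
  classical
  rw [HH_eq, HH_eq]
  congr 1
  refine Finset.sum_congr rfl fun ω _ => ?_
  congr 2
  unfold push
  refine Finset.sum_congr rfl fun ω' _ => ?_
  simp [h]

lemma HH_equiv {p' : Ω' → ℝ} (e : Ω ≃ Ω') (h : ∀ ω, p' (e ω) = p ω) (X : Ω' → α) :
    HH p (fun ω => X (e ω)) = HH p' X := by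
  classical
  have : push p (fun ω => X (e ω)) = push p' X := by
    funext a
    unfold push
    rw [← e.sum_comp]
    simp [h]
  simp [HH, this]

/-- Gibbs-type inequality. -/
lemma gibbs (hp : IsP p) (r : Ω → ℝ) (hr : ∀ ω, 0 < p ω → 0 < r ω)
    (hs : ∑ ω, p ω * r ω ≤ 1) : ∑ ω, p ω * log (r ω) ≤ 0 := by
  have : ∑ ω, p ω * log (r ω) ≤ ∑ ω, p ω * (r ω - 1) := by
    refine Finset.sum_le_sum fun ω _ => ?_
    rcases (hp.nonneg ω).eq_or_lt with h | h
    · simp [← h]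
    · exact mul_le_mul_of_nonneg_left (log_le_sub_one_of_pos (hr ω h)) h.le
  have h2 : ∑ ω, p ω * (r ω - 1) = ∑ ω, p ω * r ω - 1 := by
    simp [mul_sub, hp.sum]
  linarith

lemma push_fst_sum (p : Ω → ℝ) (X : Ω → α) (Z : Ω → γ) (z : γ) :
    ∑ a, push p (fun ω => (X ω, Z ω)) (a, z) = push p Z z := by
  classical
  unfold push
  rw [Finset.sum_comm]
  refine Finset.sum_congr rfl fun ω _ => ?_
  by_cases h : Z ω = z <;> simp [h]

lemma HH_submod (hp : IsP p) (X : Ω → α) (Y : Ω → β) (Z : Ω → γ) :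
    HH p (fun ω => (X ω, Y ω, Z ω)) + HH p Z
      ≤ HH p (fun ω => (X ω, Z ω)) + HH p (fun ω => (Y ω, Z ω)) := by
  classical
  set T := fun ω => (X ω, Y ω, Z ω) with hT
  set A := fun ω => (X ω, Z ω) with hA
  set B := fun ω => (Y ω, Z ω) with hB
  have pos : ∀ ω, 0 < p ω → 0 < push p T (T ω) ∧ 0 < push p Z (Z ω) ∧
      0 < push p A (A ω) ∧ 0 < push p B (B ω) := fun ω h =>
    ⟨h.trans_le (le_push hp T ω), h.trans_le (le_push hp Z ω), h.trans_le (le_push hp A ω),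
      h.trans_le (le_push hp B ω)⟩
  have key := gibbs hp (fun ω => push p A (A ω) * push p B (B ω) /
      (push p T (T ω) * push p Z (Z ω))) (fun ω h => by
        obtain ⟨h1, h2, h3, h4⟩ := pos ω h
        positivity) ?_
  · have : ∑ ω, p ω * log (push p A (A ω) * push p B (B ω) /
      (push p T (T ω) * push p Z (Z ω))) = ∑ ω, (p ω * log (push p A (A ω)) +
        p ω * log (push p B (B ω)) - p ω * log (push p T (T ω)) - p ω * log (push p Z (Z ω))) := by
      refine Finset.sum_congr rfl fun ω _ => ?_
      rcases (hp.nonneg ω).eq_or_lt with h | h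
      · simp [← h]
      · obtain ⟨h1, h2, h3, h4⟩ := pos ω h
        rw [log_div (by positivity) (by positivity), log_mul h3.ne' h4.ne', log_mul h1.ne' h2.ne']
        ring
    rw [this, Finset.sum_sub_distrib, Finset.sum_sub_distrib, Finset.sum_add_distrib] at key
    rw [HH_eq, HH_eq, HH_eq, HH_eq]
    linarith
  · have h1 := push_sum_mul p T (fun t => push p A (t.1, t.2.2) * push p B (t.2.1, t.2.2) /
      (push p T t * push p Z t.2.2))
    simp only [hT] at h1
    simp only [hT, hA, hB]
    rw [← h1]
    have h2 : ∀ t : α × β × γ, push p T t * (push p A (t.1, t.2.2) * push p B (t.2.1, t.2.2) /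
      (push p T t * push p Z t.2.2)) ≤ push p A (t.1, t.2.2) * push p B (t.2.1, t.2.2) /
        push p Z t.2.2 := by
      intro t
      have hn1 := push_nonneg hp A (t.1, t.2.2)
      have hn2 := push_nonneg hp B (t.2.1, t.2.2)
      have hn3 := push_nonneg hp Z t.2.2
      rcases (push_nonneg hp T t).eq_or_lt with h | h
      · rw [← h]; simp; positivity
      · rw [mul_div_assoc', mul_div_mul_left _ _ h.ne']
    refine (Finset.sum_le_sum fun t _ => h2 t).trans ?_
    simp_rw [Fintype.sum_prod_type]
    have h3 : ∀ z, ∑ a, ∑ b, push p A (a, z) * push p B (b, z) / push p Z z = push p Z z := by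
      intro z
      have e1 : ∑ a, push p A (a, z) = push p Z z := push_fst_sum p X Z z
      have e2 : ∑ a, push p B (a, z) = push p Z z := push_fst_sum p Y Z z
      simp_rw [mul_div_assoc]
      simp_rw [← Finset.mul_sum, ← Finset.sum_div]
      rw [← Finset.sum_mul, e1, e2]
      by_cases h : push p Z z = 0
      · simp [h]
      · field_simp
    calc _ = ∑ z, ∑ a, ∑ b, push p A (a, z) * push p B (b, z) / push p Z z := by
            conv_lhs => enter [2, a]; rw [Finset.sum_comm]
            rw [Finset.sum_comm]
      _ ≤ 1 := by
            rw [Finset.sum_congr rfl fun z _ => h3 z, (push_isP hp Z).sum]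

lemma HH_unit (hp : IsP p) : HH p (fun _ => ()) = 0 := by
  have := (push_isP hp (fun _ => ())).sum
  simp only [Finset.univ_unique, Finset.sum_singleton] at this
  simp [HH, ent, this]

lemma HH_subadd (hp : IsP p) (X : Ω → α) (Y : Ω → β) :
    HH p (fun ω => (X ω, Y ω)) ≤ HH p X + HH p Y := by
  have h := HH_submod hp X Y (fun _ => ())
  rw [HH_unit hp] at h
  have e1 : HH p (fun ω => (X ω, Y ω, ())) = HH p (fun ω => (X ω, Y ω)) :=
    HH_congr (by simp)
  have e2 : HH p (fun ω => (X ω, ())) = HH p X := HH_congr (by simp)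
  have e3 : HH p (fun ω => (Y ω, ())) = HH p Y := HH_congr (by simp)
  linarith

lemma HH_mono (hp : IsP p) (X : Ω → α) (Z : Ω → γ) (h : ∀ ω ω', X ω = X ω' → Z ω = Z ω') :
    HH p Z ≤ HH p X := by
  have h1 := HH_submod hp X X Z
  have e1 : HH p (fun ω => (X ω, X ω, Z ω)) = HH p X :=
    HH_congr (fun ω ω' => by have := h ω ω'; simp; tauto)
  have e2 : HH p (fun ω => (X ω, Z ω)) = HH p X :=
    HH_congr (fun ω ω' => by have := h ω ω'; simp; tauto)
  linarith

lemma ent_nonneg {p : α → ℝ} (hp : IsP p) : 0 ≤ ent p := by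
  refine Finset.sum_nonneg fun a _ => negMulLog_nonneg (hp.nonneg a) ?_
  rw [← hp.sum]
  exact Finset.single_le_sum (fun i _ => hp.nonneg i) (Finset.mem_univ a)

lemma ent_le_log {p : α → ℝ} (hp : IsP p) (S : Finset α) (hS : ∀ a, p a ≠ 0 → a ∈ S) :
    ent p ≤ log (S.card) := by
  classical
  have hne : S.Nonempty := by
    by_contra h
    rw [Finset.not_nonempty_iff_eq_empty] at h
    have : ∀ a, p a = 0 := fun a => by
      by_contra h'; have := hS a h'; simp [h] at this
    have := hp.sum; simp_all
  have hc : (0 : ℝ) < S.card := by exact_mod_cast hne.card_pos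
  have := gibbs hp (fun a => 1 / (p a * S.card)) (fun a h => by positivity) ?_
  · have h2 : ∑ a, p a * log (1 / (p a * S.card)) = ∑ a, (negMulLog (p a) - p a * log S.card) := by
      refine Finset.sum_congr rfl fun a _ => ?_
      rcases (hp.nonneg a).eq_or_lt with h | h
      · simp [← h]
      · rw [one_div, log_inv, log_mul h.ne' hc.ne', negMulLog]; ring
    rw [h2, Finset.sum_sub_distrib, ← Finset.sum_mul, hp.sum] at this
    unfold ent; linarith
  · calc ∑ a, p a * (1 / (p a * S.card)) ≤ ∑ a, if a ∈ S then 1 / (S.card : ℝ) else 0 := by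
          refine Finset.sum_le_sum fun a _ => ?_
          by_cases h : p a = 0
          · simp [h]; split_ifs <;> positivity
          · rw [if_pos (hS a h)]; apply le_of_eq; field_simp
      _ = 1 := by
          rw [← Finset.sum_filter]; simp; field_simp

/-- product law -/
def tp (p : Ω → ℝ) (q : Ω' → ℝ) : Ω × Ω' → ℝ := fun ω => p ω.1 * q ω.2

lemma tp_isP {q : Ω' → ℝ} (hp : IsP p) (hq : IsP q) : IsP (tp p q) := by
  refine ⟨fun ω => mul_nonneg (hp.nonneg _) (hq.nonneg _), ?_⟩
  rw [Fintype.sum_prod_type]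
  simp [tp, ← Finset.mul_sum, hp.sum, hq.sum]

lemma push_fst {q : Ω' → ℝ} (hq : IsP q) (X : Ω → α) :
    push (tp p q) (fun ω => X ω.1) = push p X := by
  classical
  funext a
  unfold push
  rw [Fintype.sum_prod_type]
  refine Finset.sum_congr rfl fun ω _ => ?_
  by_cases h : X ω = a <;> simp [tp, h, ← Finset.mul_sum, hq.sum]

lemma push_snd {q : Ω' → ℝ} (hp : IsP p) (X : Ω' → α) :
    push (tp p q) (fun ω => X ω.2) = push q X := by
  classical
  funext a
  unfold push
  rw [Fintype.sum_prod_type_right]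
  refine Finset.sum_congr rfl fun ω _ => ?_
  by_cases h : X ω = a <;> simp [tp, h, ← Finset.sum_mul, hp.sum]

lemma push_tp {q : Ω' → ℝ} (X : Ω → α) (Y : Ω' → β) :
    push (tp p q) (fun ω => (X ω.1, Y ω.2)) = tp (push p X) (push q Y) := by
  classical
  funext ⟨a, b⟩
  simp only [push, tp]
  rw [Fintype.sum_prod_type, Finset.sum_mul_sum]
  refine Finset.sum_congr rfl fun ω _ => Finset.sum_congr rfl fun ω' _ => ?_
  by_cases h : X ω = a <;> by_cases h' : Y ω' = b <;> simp [h, h']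

lemma ent_tp {q : Ω' → ℝ} (hp : IsP p) (hq : IsP q) : ent (tp p q) = ent p + ent q := by
  unfold ent tp
  rw [Fintype.sum_prod_type]
  simp_rw [negMulLog_mul, Finset.sum_add_distrib, ← Finset.mul_sum, ← Finset.sum_mul, hq.sum,
    hp.sum]
  ring

lemma HH_fst {q : Ω' → ℝ} (hq : IsP q) (X : Ω → α) :
    HH (tp p q) (fun ω => X ω.1) = HH p X := by
  simp [HH, push_fst hq]

lemma HH_snd {q : Ω' → ℝ} (hp : IsP p) (X : Ω' → α) :
    HH (tp p q) (fun ω => X ω.2) = HH q X := by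
  simp [HH, push_snd hp]

lemma HH_tp {q : Ω' → ℝ} (hp : IsP p) (hq : IsP q) (X : Ω → α) (Y : Ω' → β) :
    HH (tp p q) (fun ω => (X ω.1, Y ω.2)) = HH p X + HH q Y := by
  rw [HH, push_tp, ent_tp (push_isP hp X) (push_isP hq Y)]; rfl

end basics
end part1

section part2
open Finset Real
set_option linter.unusedSectionVars false

section grp
variable {G : Type} [AddCommGroup G] [Fintype G]
variable {Ω ζ α β : Type} [Fintype Ω] [Fintype ζ] [Fintype α] [Fintype β]

noncomputable def conv (p q : G → ℝ) : G → ℝ := push (tp p q) (fun ω => ω.1 + ω.2)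

lemma conv_isP {p q : G → ℝ} (hp : IsP p) (hq : IsP q) : IsP (conv p q) :=
  push_isP (tp_isP hp hq) _

lemma conv_apply (p q : G → ℝ) (g : G) : conv p q g = ∑ a, p a * q (g - a) := by
  classical
  unfold conv push tp
  rw [Fintype.sum_prod_type]
  refine Finset.sum_congr rfl fun a _ => ?_
  rw [Finset.sum_eq_single (g - a)]
  · simp
  · intro b _ hb
    have : a + b ≠ g := fun h => hb (by rw [← h]; abel)
    simp [this]
  · simp

lemma push_add (p : Ω → ℝ) (A B : Ω → G) (Z : Ω → ζ) (g : G) (z : ζ) :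
    push p (fun ω => (A ω + B ω, Z ω)) (g, z) =
      ∑ a, push p (fun ω => (A ω, B ω, Z ω)) (a, g - a, z) := by
  classical
  unfold push
  rw [Finset.sum_comm]
  refine Finset.sum_congr rfl fun ω _ => ?_
  rw [Finset.sum_eq_single (A ω)]
  · have : A ω + B ω = g ↔ B ω = g - A ω := by rw [eq_sub_iff_add_eq, add_comm]
    simp [this]
  · intro b _ hb
    simp [Ne.symm hb]
  · simp

/-- conditional law -/
noncomputable def cl (p : Ω → ℝ) (X : Ω → α) (Z : Ω → ζ) (z : ζ) : α → ℝ :=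
  fun g => push p (fun ω => (X ω, Z ω)) (g, z) / push p Z z

lemma cl_isP {p : Ω → ℝ} (hp : IsP p) (X : Ω → α) (Z : Ω → ζ) (z : ζ) (hz : push p Z z ≠ 0) :
    IsP (cl p X Z z) := by
  refine ⟨fun a => div_nonneg (push_nonneg hp _ _) (push_nonneg hp _ _), ?_⟩
  simp only [cl]
  rw [← Finset.sum_div, push_fst_sum, div_self hz]

lemma push_pair_eq_zero {p : Ω → ℝ} (hp : IsP p) (X : Ω → α) (Z : Ω → ζ) (z : ζ) (a : α)
    (hz : push p Z z = 0) : push p (fun ω => (X ω, Z ω)) (a, z) = 0 := by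
  have h := push_fst_sum p X Z z
  rw [hz] at h
  exact (Finset.sum_eq_zero_iff_of_nonneg (fun a _ => push_nonneg hp _ _)).1 h a (Finset.mem_univ _)

lemma push_pair_eq_zero' {p : Ω → ℝ} (hp : IsP p) (X : Ω → α) (Z : Ω → ζ) (z : ζ) (a : α)
    (ha : push p X a = 0) : push p (fun ω => (X ω, Z ω)) (a, z) = 0 := by
  classical
  unfold push at *
  rw [Finset.sum_eq_zero_iff_of_nonneg (fun ω _ => by split_ifs <;> simp [hp.nonneg])] at ha
  refine Finset.sum_eq_zero fun ω hω => ?_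
  have := ha ω hω
  by_cases h : X ω = a <;> by_cases h' : Z ω = z <;> simp_all

lemma chain {p : Ω → ℝ} (hp : IsP p) (X : Ω → α) (Z : Ω → ζ) :
    ∑ z, push p Z z * ent (cl p X Z z) = HH p (fun ω => (X ω, Z ω)) - HH p Z := by
  have h1 : ∀ z, push p Z z * ent (cl p X Z z) =
      (∑ a, negMulLog (push p (fun ω => (X ω, Z ω)) (a, z))) - negMulLog (push p Z z) := by
    intro z
    by_cases hz : push p Z z = 0
    · simp [hz, push_pair_eq_zero hp X Z z _ hz]
    · have h2 : ∀ a, negMulLog (push p (fun ω => (X ω, Z ω)) (a, z)) =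
          cl p X Z z a * negMulLog (push p Z z) + push p Z z * negMulLog (cl p X Z z a) := by
        intro a
        have : push p (fun ω => (X ω, Z ω)) (a, z) = push p Z z * cl p X Z z a := by
          unfold cl; field_simp
        rw [this, negMulLog_mul]
      simp_rw [h2]
      rw [Finset.sum_add_distrib, ← Finset.sum_mul, (cl_isP hp X Z z hz).sum, ← Finset.mul_sum]
      unfold ent; ring
  simp_rw [h1]
  rw [Finset.sum_sub_distrib]
  unfold HH ent
  rw [Fintype.sum_prod_type_right]

def CI (p : Ω → ℝ) (A : Ω → α) (B : Ω → β) (Z : Ω → ζ) : Prop :=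
  ∀ a b z, push p (fun ω => (A ω, B ω, Z ω)) (a, b, z) * push p Z z =
    push p (fun ω => (A ω, Z ω)) (a, z) * push p (fun ω => (B ω, Z ω)) (b, z)

lemma conv_cl {p : Ω → ℝ} {A B : Ω → G} {Z : Ω → ζ} (h : CI p A B Z) (z : ζ)
    (hz : push p Z z ≠ 0) :
    conv (cl p A Z z) (cl p B Z z) = cl p (fun ω => A ω + B ω) Z z := by
  funext g
  rw [conv_apply]
  simp only [cl]
  rw [push_add, Finset.sum_div]
  refine Finset.sum_congr rfl fun a _ => ?_
  rw [div_mul_div_comm, ← h]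
  field_simp

lemma conv_cl' {p : Ω → ℝ} {y : G → ℝ} (hy : IsP y) (A : Ω → G) (Z : Ω → ζ) (z : ζ) :
    conv y (cl p A Z z) = cl (tp y p) (fun ω => ω.1 + A ω.2) (fun ω => Z ω.2) z := by
  funext g
  rw [conv_apply]
  simp only [cl]
  rw [push_add, Finset.sum_div, push_snd hy]
  refine Finset.sum_congr rfl fun a _ => ?_
  have := push_tp (p := y) (q := p) (fun g => g) (fun ω => (A ω, Z ω))
  rw [this, tp, push_id]
  ring

lemma conv_push {p : Ω → ℝ} {y : G → ℝ} (A : Ω → G) :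
    conv y (push p A) = push (tp y p) (fun ω => ω.1 + A ω.2) := by
  have := push_tp (p := y) (q := p) (fun g => g) A
  rw [push_id] at this
  unfold conv
  rw [← this, push_push]

lemma concav {p : Ω → ℝ} (hp : IsP p) {y : G → ℝ} (hy : IsP y) (A : Ω → G) (Z : Ω → ζ) :
    ∑ z, push p Z z * ent (conv y (cl p A Z z)) ≤ ent (conv y (push p A)) := by
  simp_rw [conv_cl' hy]
  have h1 := chain (tp_isP hy hp) (fun ω => ω.1 + A ω.2) (fun ω => Z ω.2)
  rw [push_snd hy] at h1
  rw [h1, conv_push]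
  have h2 := HH_subadd (tp_isP hy hp) (fun ω => ω.1 + A ω.2) (fun ω => Z ω.2)
  change _ ≤ HH (tp y p) (fun ω => ω.1 + A ω.2)
  linarith

lemma select {p : Ω → ℝ} (hp : IsP p) (A B : Ω → G) (Z : Ω → ζ) (hci : CI p A B Z)
    {y1 y2 : G → ℝ} (hy1 : IsP y1) (hy2 : IsP y2) (l0 l1 l2 e1 e2 : ℝ) (he1 : 0 ≤ e1)
    (he2 : 0 ≤ e2) :
    ∃ a b : G → ℝ, IsP a ∧ IsP b ∧ (∀ g, a g ≠ 0 → push p A g ≠ 0) ∧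
      l0 * ent (conv a b) + l1 * ent a + l2 * ent b + e1 * ent (conv y1 a) + e2 * ent (conv y2 b) ≤
      l0 * (HH p (fun ω => (A ω + B ω, Z ω)) - HH p Z) + l1 * (HH p (fun ω => (A ω, Z ω)) - HH p Z)
      + l2 * (HH p (fun ω => (B ω, Z ω)) - HH p Z) + e1 * ent (conv y1 (push p A))
      + e2 * ent (conv y2 (push p B)) := by
  set R := l0 * (HH p (fun ω => (A ω + B ω, Z ω)) - HH p Z)
      + l1 * (HH p (fun ω => (A ω, Z ω)) - HH p Z)
      + l2 * (HH p (fun ω => (B ω, Z ω)) - HH p Z) + e1 * ent (conv y1 (push p A))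
      + e2 * ent (conv y2 (push p B)) with hR
  set Φ : ζ → ℝ := fun z => l0 * ent (conv (cl p A Z z) (cl p B Z z)) + l1 * ent (cl p A Z z)
    + l2 * ent (cl p B Z z) + e1 * ent (conv y1 (cl p A Z z)) + e2 * ent (conv y2 (cl p B Z z))
    with hΦ
  have hsum : ∑ z, push p Z z * Φ z ≤ R := by
    have h0 : ∑ z, push p Z z * ent (conv (cl p A Z z) (cl p B Z z)) =
        HH p (fun ω => (A ω + B ω, Z ω)) - HH p Z := by
      rw [← chain hp (fun ω => A ω + B ω) Z]
      refine Finset.sum_congr rfl fun z _ => ?_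
      by_cases hz : push p Z z = 0
      · simp [hz]
      · rw [conv_cl hci z hz]
    have h1 := chain hp A Z
    have h2 := chain hp B Z
    have h3 := mul_le_mul_of_nonneg_left (concav hp hy1 A Z) he1
    have h4 := mul_le_mul_of_nonneg_left (concav hp hy2 B Z) he2
    have : ∑ z, push p Z z * Φ z = l0 * ∑ z, push p Z z * ent (conv (cl p A Z z) (cl p B Z z))
      + l1 * ∑ z, push p Z z * ent (cl p A Z z) + l2 * ∑ z, push p Z z * ent (cl p B Z z)
      + e1 * ∑ z, push p Z z * ent (conv y1 (cl p A Z z))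
      + e2 * ∑ z, push p Z z * ent (conv y2 (cl p B Z z)) := by
      simp_rw [Finset.mul_sum, ← Finset.sum_add_distrib]
      refine Finset.sum_congr rfl fun z _ => ?_
      simp only [hΦ]; ring
    rw [this, h0, h1, h2, hR]
    linarith
  have hex : ∃ z, push p Z z ≠ 0 ∧ Φ z ≤ R := by
    by_contra hcon
    push Not at hcon
    have hP := push_isP hp Z
    have : ∑ z, push p Z z * R < ∑ z, push p Z z * Φ z := by
      have hex : ∃ z, push p Z z ≠ 0 := by
        by_contra h
        push Not at h
        have := hP.sum
        simp [h] at this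
      obtain ⟨z, hz⟩ := hex
      refine Finset.sum_lt_sum (fun i _ => ?_) ⟨z, Finset.mem_univ _, ?_⟩
      · by_cases hi : push p Z i = 0
        · simp [hi]
        · exact mul_le_mul_of_nonneg_left (hcon i hi).le (hP.nonneg i)
      · exact mul_lt_mul_of_pos_left (hcon z hz) (lt_of_le_of_ne (hP.nonneg z) (Ne.symm hz))
    rw [← Finset.sum_mul, hP.sum] at this
    linarith
  obtain ⟨z, hz, hle⟩ := hex
  refine ⟨cl p A Z z, cl p B Z z, cl_isP hp A Z z hz, cl_isP hp B Z z hz, ?_, hle⟩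
  intro g hg h
  apply hg
  simp [cl, push_pair_eq_zero' hp A Z z g h]

open scoped Classical in
/-- conditionally independent coupling -/
noncomputable def cpl (q : Ω → ℝ) (Z : Ω → ζ) : Ω × Ω → ℝ :=
  fun ω => if Z ω.1 = Z ω.2 then q ω.1 * q ω.2 / push q Z (Z ω.1) else 0

lemma cpl_sum_snd {q : Ω → ℝ} (hq : IsP q) (Z : Ω → ζ) (ω : Ω) :
    ∑ ω', cpl q Z (ω, ω') = q ω := by
  classical
  have h1 : ∑ ω', cpl q Z (ω, ω') = q ω * push q Z (Z ω) / push q Z (Z ω) := by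
    simp only [cpl]
    conv_rhs => enter [1, 2]; unfold push
    rw [Finset.mul_sum, Finset.sum_div]
    refine Finset.sum_congr rfl fun ω' _ => ?_
    by_cases h : Z ω = Z ω'
    · simp [h]
    · simp [h, Ne.symm h]
  rw [h1]
  by_cases h : push q Z (Z ω) = 0
  · have := le_push hq Z ω
    have h3 := hq.nonneg ω
    rw [h] at this
    have : q ω = 0 := le_antisymm this h3
    simp [this]
  · field_simp

lemma cpl_symm (q : Ω → ℝ) (Z : Ω → ζ) (ω ω' : Ω) : cpl q Z (ω, ω') = cpl q Z (ω', ω) := by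
  classical
  unfold cpl
  by_cases h : Z ω = Z ω'
  · simp [h, mul_comm]
  · simp [h, Ne.symm h]

lemma cpl_isP {q : Ω → ℝ} (hq : IsP q) (Z : Ω → ζ) : IsP (cpl q Z) := by
  classical
  refine ⟨fun ω => ?_, ?_⟩
  · unfold cpl
    split_ifs
    · exact div_nonneg (mul_nonneg (hq.nonneg _) (hq.nonneg _)) (push_nonneg hq _ _)
    · exact le_rfl
  · rw [Fintype.sum_prod_type]
    simp_rw [cpl_sum_snd hq, hq.sum]

lemma push_cpl_fst {q : Ω → ℝ} (hq : IsP q) (Z : Ω → ζ) (X : Ω → α) :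
    push (cpl q Z) (fun ω => X ω.1) = push q X := by
  classical
  funext a
  unfold push
  rw [Fintype.sum_prod_type]
  refine Finset.sum_congr rfl fun ω _ => ?_
  by_cases h : X ω = a
  · simp [h, cpl_sum_snd hq]
  · simp [h]

lemma push_cpl_snd {q : Ω → ℝ} (hq : IsP q) (Z : Ω → ζ) (X : Ω → α) :
    push (cpl q Z) (fun ω => X ω.2) = push q X := by
  classical
  funext a
  unfold push
  rw [Fintype.sum_prod_type_right]
  refine Finset.sum_congr rfl fun ω _ => ?_
  by_cases h : X ω = a
  · simp_rw [cpl_symm q Z _ ω]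
    simp [h, cpl_sum_snd hq]
  · simp [h]

lemma cpl_Z {q : Ω → ℝ} (Z : Ω → ζ) (ω : Ω × Ω) (h : cpl q Z ω ≠ 0) : Z ω.1 = Z ω.2 := by
  classical
  by_contra h'
  exact h (by simp [cpl, h'])

lemma push_congr_ae {p : Ω → ℝ} {X Y : Ω → α} (h : ∀ ω, p ω ≠ 0 → X ω = Y ω) :
    push p X = push p Y := by
  classical
  funext a
  unfold push
  refine Finset.sum_congr rfl fun ω _ => ?_
  by_cases h' : p ω = 0
  · simp [h']
  · rw [h ω h']

lemma ent_cpl {q : Ω → ℝ} (hq : IsP q) (Z : Ω → ζ) :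
    ent (cpl q Z) = 2 * ent q - HH q Z := by
  classical
  have e1 := push_sum_mul (cpl q Z) (fun ω => ω.1) (fun ω => log (q ω))
  have e2 := push_sum_mul (cpl q Z) (fun ω => ω.2) (fun ω => log (q ω))
  have e3 := push_sum_mul (cpl q Z) (fun ω => ω.1) (fun ω => log (push q Z (Z ω)))
  rw [push_cpl_fst hq Z (fun ω => ω), push_id] at e1 e3
  rw [push_cpl_snd hq Z (fun ω => ω), push_id] at e2
  have : ent (cpl q Z) = ∑ ω, (-(cpl q Z ω * log (q ω.1)) - cpl q Z ω * log (q ω.2)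
      + cpl q Z ω * log (push q Z (Z ω.1))) := by
    refine Finset.sum_congr rfl fun ω _ => ?_
    by_cases h : cpl q Z ω = 0
    · simp [h]
    · have hz := cpl_Z Z ω h
      have hv : cpl q Z ω = q ω.1 * q ω.2 / push q Z (Z ω.1) := by simp [cpl, hz]
      have h1 : q ω.1 ≠ 0 := fun h' => h (by rw [hv, h']; simp)
      have h2 : q ω.2 ≠ 0 := fun h' => h (by rw [hv, h']; simp)
      have h3 : push q Z (Z ω.1) ≠ 0 := fun h' => h (by rw [hv, h']; simp)
      rw [negMulLog]
      conv_lhs => rw [hv, log_div (mul_ne_zero h1 h2) h3, log_mul h1 h2, ← hv]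
      ring
  rw [this, Finset.sum_add_distrib, Finset.sum_sub_distrib, Finset.sum_neg_distrib, ← e1, ← e2,
    ← e3, HH_eq]
  unfold ent negMulLog
  simp only [neg_mul, Finset.sum_neg_distrib]
  ring

lemma cpl_CI {q : Ω → ℝ} (hq : IsP q) (Z : Ω → ζ) (X : Ω → α) (Y : Ω → β) :
    CI (cpl q Z) (fun ω => X ω.1) (fun ω => Y ω.2) (fun ω => Z ω.1) := by
  classical
  intro a b z
  rw [push_cpl_fst hq Z Z, push_cpl_fst hq Z (fun ω => (X ω, Z ω))]
  have e : push (cpl q Z) (fun ω => (Y ω.2, Z ω.1)) = push q (fun ω => (Y ω, Z ω)) := by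
    rw [← push_cpl_snd hq Z (fun ω => (Y ω, Z ω))]
    refine push_congr_ae fun ω h => ?_
    rw [cpl_Z Z ω h]
  rw [e]
  by_cases hz : push q Z z = 0
  · rw [hz, push_pair_eq_zero hq X Z z a hz]; simp
  have : push (cpl q Z) (fun ω => (X ω.1, Y ω.2, Z ω.1)) (a, b, z) =
      push q (fun ω => (X ω, Z ω)) (a, z) * push q (fun ω => (Y ω, Z ω)) (b, z) / push q Z z := by
    conv_lhs => unfold push
    conv_rhs => enter [1, 1]; unfold push
    conv_rhs => enter [1, 2]; unfold push
    rw [Fintype.sum_prod_type, Finset.sum_mul_sum, Finset.sum_div]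
    refine Finset.sum_congr rfl fun ω _ => ?_
    rw [Finset.sum_div]
    refine Finset.sum_congr rfl fun ω' _ => ?_
    by_cases h1 : X ω = a <;> by_cases h2 : Y ω' = b <;> by_cases h3 : Z ω = z <;>
      by_cases h4 : Z ω' = z <;> simp [h1, h2, h3, h4, cpl]
    exact fun h5 => absurd h5.symm h4
  rw [this]
  field_simp

/-- entropic BSG, with selection of a fibre -/
lemma bsg {σ : Type} [Fintype σ] (h2 : ∀ x : G, x + x = 0) {q : G × G × σ → ℝ} (hq : IsP q)
    {y1 y2 : G → ℝ} (hy1 : IsP y1) (hy2 : IsP y2) (l0 l1 l2 e1 e2 : ℝ) (hl0 : 0 ≤ l0)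
    (he1 : 0 ≤ e1) (he2 : 0 ≤ e2) :
    ∃ a b : G → ℝ, IsP a ∧ IsP b ∧ (∀ g, a g ≠ 0 → push q (fun ω => ω.1) g ≠ 0) ∧
      l0 * ent (conv a b) + l1 * ent a + l2 * ent b + e1 * ent (conv y1 a) + e2 * ent (conv y2 b) ≤
      l0 * (HH q (fun ω => (ω.1 + ω.2.1, ω.2.2)) + 2 * HH q (fun ω => (ω.1, ω.2.2))
        + 2 * HH q (fun ω => (ω.2.1, ω.2.2)) - 3 * HH q (fun ω => ω.2.2) - 2 * ent q)
      + (l1 + l2) * (ent q - HH q (fun ω => (ω.1 + ω.2.1, ω.2.2)))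
      + e1 * ent (conv y1 (push q (fun ω => ω.1)))
      + e2 * ent (conv y2 (push q (fun ω => ω.2.1))) := by
  set Z : G × G × σ → G × σ := fun ω => (ω.1 + ω.2.1, ω.2.2) with hZ
  set P := cpl q Z with hPdef
  have hP : IsP P := cpl_isP hq Z
  obtain ⟨a, b, ha, hb, hs, hle⟩ := select hP (fun ω => ω.1.1) (fun ω => ω.2.2.1) (fun ω => Z ω.1)
    (cpl_CI hq Z (fun ω => ω.1) (fun ω => ω.2.1)) hy1 hy2 l0 l1 l2 e1 e2 he1 he2
  have pA : push P (fun ω => ω.1.1) = push q (fun ω => ω.1) := push_cpl_fst hq Z (fun ω => ω.1)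
  have pB : push P (fun ω => ω.2.2.1) = push q (fun ω => ω.2.1) :=
    push_cpl_snd hq Z (fun ω => ω.2.1)
  have ae : ∀ ω, P ω ≠ 0 → ω.1.1 + ω.1.2.1 = ω.2.1 + ω.2.2.1 ∧ ω.1.2.2 = ω.2.2.2 := by
    intro ω h
    have := cpl_Z Z ω h
    simpa [hZ] using this
  have hHZ : HH P (fun ω => Z ω.1) = HH q Z := by simp only [HH]; rw [push_cpl_fst hq Z Z]
  have hAZ : HH P (fun ω => (ω.1.1, Z ω.1)) = ent q := by
    have : HH P (fun ω => (ω.1.1, Z ω.1)) = HH q (fun ω => (ω.1, Z ω)) := by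
      simp only [HH]; rw [push_cpl_fst hq Z (fun ω => (ω.1, Z ω))]
    rw [this, ← HH_id]
    apply HH_congr
    rintro ⟨x, y, s⟩ ⟨x', y', s'⟩
    simp only [hZ, Prod.mk.injEq]
    constructor
    · rintro ⟨rfl, h, rfl⟩; simpa using h
    · rintro ⟨rfl, rfl, rfl⟩; simp
  have hBZ : HH P (fun ω => (ω.2.2.1, Z ω.1)) = ent q := by
    have : HH P (fun ω => (ω.2.2.1, Z ω.1)) = HH q (fun ω => (ω.2.1, Z ω)) := by
      simp only [HH]
      rw [← push_cpl_snd hq Z (fun ω => (ω.2.1, Z ω))]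
      congr 1
      refine push_congr_ae fun ω h => ?_
      rw [cpl_Z Z ω h]
    rw [this, ← HH_id]
    apply HH_congr
    rintro ⟨x, y, s⟩ ⟨x', y', s'⟩
    simp only [hZ, Prod.mk.injEq]
    constructor
    · rintro ⟨rfl, h, rfl⟩; simpa using h
    · rintro ⟨rfl, rfl, rfl⟩; simp
  have hS : HH P (fun ω => ω.1.2.2) = HH q (fun ω => ω.2.2) := by
    simp only [HH]; rw [push_cpl_fst hq Z (fun ω => ω.2.2)]
  -- H[A1+B2 | Z] ≤ H[A1+B2 | S]
  have s1 := HH_submod hP (fun ω => ω.1.1 + ω.2.2.1) (fun ω => Z ω.1) (fun ω => ω.1.2.2)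
  have s1a : HH P (fun ω => (ω.1.1 + ω.2.2.1, Z ω.1, ω.1.2.2)) =
      HH P (fun ω => (ω.1.1 + ω.2.2.1, Z ω.1)) := by
    apply HH_congr; intro ω ω'; simp [hZ]
  have s1b : HH P (fun ω => (Z ω.1, ω.1.2.2)) = HH P (fun ω => Z ω.1) := by
    apply HH_congr; intro ω ω'; simp [hZ]
  -- submodularity for (A1, T), (B1, T) given T = (A1+B2, S)
  have s2 := HH_submod hP (fun ω => ω.1.1) (fun ω => ω.1.2.1)
    (fun ω => (ω.1.1 + ω.2.2.1, ω.1.2.2))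
  have s2a : HH P (fun ω => (ω.1.1, ω.1.2.1, ω.1.1 + ω.2.2.1, ω.1.2.2)) = ent P := by
    have e : push P (fun ω => (ω.1.1, ω.1.2.1, ω.2.2.1, ω.1.2.2, ω.1.1 + ω.1.2.1 - ω.2.2.1, ω.1.2.2))
        = push P (fun ω => (ω.1.1, ω.1.2.1, ω.2.2.1, ω.1.2.2, ω.2.1, ω.2.2.2)) := by
      refine push_congr_ae fun ω h => ?_
      obtain ⟨h1, h2⟩ := ae ω h
      simp [h1, h2]
    calc _ = HH P (fun ω => (ω.1.1, ω.1.2.1, ω.2.2.1, ω.1.2.2, ω.1.1 + ω.1.2.1 - ω.2.2.1,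
              ω.1.2.2)) := by
            apply HH_congr
            rintro ⟨⟨x, y, s⟩, ⟨x', y', s'⟩⟩ ⟨⟨u, v, t⟩, ⟨u', v', t'⟩⟩
            simp only [Prod.mk.injEq]
            constructor
            · rintro ⟨rfl, rfl, h, rfl⟩
              have h : y' = v' := by simpa using h
              subst h; simp
            · rintro ⟨rfl, rfl, rfl, rfl, _⟩; simp
      _ = HH P (fun ω => (ω.1.1, ω.1.2.1, ω.2.2.1, ω.1.2.2, ω.2.1, ω.2.2.2)) := by
            unfold HH; rw [e]
      _ = ent P := by
            rw [← HH_id]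
            apply HH_congr
            rintro ⟨⟨x, y, s⟩, ⟨x', y', s'⟩⟩ ⟨⟨u, v, t⟩, ⟨u', v', t'⟩⟩
            simp only [Prod.mk.injEq]
            tauto
  have s2b : HH P (fun ω => (ω.1.1, ω.1.1 + ω.2.2.1, ω.1.2.2)) =
      HH P (fun ω => (ω.1.1, ω.2.2.1, ω.1.2.2)) := by
    apply HH_congr
    rintro ⟨⟨x, y, s⟩, ⟨x', y', s'⟩⟩ ⟨⟨u, v, t⟩, ⟨u', v', t'⟩⟩
    simp only [Prod.mk.injEq]
    constructor
    · rintro ⟨rfl, h, rfl⟩; simpa using h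
    · rintro ⟨rfl, rfl, rfl⟩; simp
  have s2c : HH P (fun ω => (ω.1.2.1, ω.1.1 + ω.2.2.1, ω.1.2.2)) =
      HH P (fun ω => (ω.1.2.1, ω.2.1, ω.1.2.2)) := by
    have e : push P (fun ω => (ω.1.2.1, ω.1.1 + ω.2.2.1, ω.1.2.2)) =
        push P (fun ω => (ω.1.2.1, ω.2.1 + ω.1.2.1, ω.1.2.2)) := by
      refine push_congr_ae fun ω h => ?_
      obtain ⟨h1, h2'⟩ := ae ω h
      have : ω.1.1 + ω.2.2.1 = ω.2.1 + ω.1.2.1 := by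
        have h3 := h2 ω.2.2.1
        have h4 := h2 ω.1.2.1
        calc ω.1.1 + ω.2.2.1 = (ω.1.1 + ω.1.2.1) + ω.1.2.1 + ω.2.2.1 := by
              rw [add_assoc ω.1.1, h4, add_zero]
          _ = ω.2.1 + ω.1.2.1 + (ω.2.2.1 + ω.2.2.1) := by rw [h1]; abel
          _ = _ := by rw [h3, add_zero]
      simp [this]
    unfold HH
    rw [e]
    change HH _ _ = HH _ _
    apply HH_congr
    rintro ⟨⟨x, y, s⟩, ⟨x', y', s'⟩⟩ ⟨⟨u, v, t⟩, ⟨u', v', t'⟩⟩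
    simp only [Prod.mk.injEq]
    constructor
    · rintro ⟨rfl, h, rfl⟩; simpa using h
    · rintro ⟨rfl, rfl, rfl⟩; simp
  -- subadditivity given S
  have s3 := HH_submod hP (fun ω => ω.1.1) (fun ω => ω.2.2.1) (fun ω => ω.1.2.2)
  have s4 := HH_submod hP (fun ω => ω.1.2.1) (fun ω => ω.2.1) (fun ω => ω.1.2.2)
  have m1 : HH P (fun ω => (ω.1.1, ω.1.2.2)) = HH q (fun ω => (ω.1, ω.2.2)) := by
    simp only [HH]; rw [push_cpl_fst hq Z (fun ω => (ω.1, ω.2.2))]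
  have m2 : HH P (fun ω => (ω.1.2.1, ω.1.2.2)) = HH q (fun ω => (ω.2.1, ω.2.2)) := by
    simp only [HH]; rw [push_cpl_fst hq Z (fun ω => (ω.2.1, ω.2.2))]
  have m3 : HH P (fun ω => (ω.2.1, ω.1.2.2)) = HH q (fun ω => (ω.1, ω.2.2)) := by
    simp only [HH]; rw [← push_cpl_snd hq Z (fun ω => (ω.1, ω.2.2))]
    congr 1
    refine push_congr_ae fun ω h => ?_
    rw [(ae ω h).2]
  have m4 : HH P (fun ω => (ω.2.2.1, ω.1.2.2)) = HH q (fun ω => (ω.2.1, ω.2.2)) := by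
    simp only [HH]; rw [← push_cpl_snd hq Z (fun ω => (ω.2.1, ω.2.2))]
    congr 1
    refine push_congr_ae fun ω h => ?_
    rw [(ae ω h).2]
  have hent : ent P = 2 * ent q - HH q Z := ent_cpl hq Z
  refine ⟨a, b, ha, hb, ?_, ?_⟩
  · rw [← pA]; exact hs
  · rw [pA, pB, hAZ, hBZ, hHZ] at hle
    rw [s1a, s1b, hHZ, hS] at s1
    rw [s2a, s2b, s2c] at s2
    rw [m1, m4, hS] at s3
    rw [m2, m3, hS] at s4
    have : HH P (fun ω => (ω.1.1 + ω.2.2.1, Z ω.1)) - HH q Z ≤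
      (HH q Z + 2 * HH q (fun ω => (ω.1, ω.2.2))
        + 2 * HH q (fun ω => (ω.2.1, ω.2.2)) - 3 * HH q (fun ω => ω.2.2) - 2 * ent q) := by
      linarith
    have := mul_le_mul_of_nonneg_left this hl0
    linarith

end grp
end part2

section part3
open Finset Real
set_option linter.unusedSectionVars false
set_option linter.unusedVariables false

section pfr
variable {G : Type} [AddCommGroup G] [Fintype G]
variable {Ω Ω' ζ ζ' α β : Type} [Fintype Ω] [Fintype Ω'] [Fintype ζ] [Fintype ζ'] [Fintype α] [Fintype β]

lemma push_equiv {p : Ω → ℝ} {p' : Ω' → ℝ} (e : Ω ≃ Ω') (h : ∀ ω, p' (e ω) = p ω) (X : Ω' → α) :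
    push p (fun ω => X (e ω)) = push p' X := by
  classical
  funext a
  unfold push
  rw [← e.sum_comp]
  simp [h]

lemma conv_comm (p q : G → ℝ) : conv p q = conv q p := by
  unfold conv
  rw [← push_equiv (p := tp p q) (p' := tp q p) (Equiv.prodComm G G)
    (fun ω => by simp [tp, mul_comm])]
  simp [add_comm]

lemma conv_push2 (p : Ω → ℝ) (q : Ω' → ℝ) (X : Ω → G) (Y : Ω' → G) :
    conv (push p X) (push q Y) = push (tp p q) (fun ω => X ω.1 + Y ω.2) := by
  unfold conv
  rw [← push_tp, push_push]

lemma ent_conv (p q : G → ℝ) : ent (conv p q) = HH (tp p q) (fun ω => ω.1 + ω.2) := rfl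

lemma HH_add_pair {p q : G → ℝ} (hp : IsP p) (hq : IsP q) :
    HH (tp p q) (fun ω => (ω.1, ω.1 + ω.2)) = ent p + ent q := by
  rw [← ent_tp hp hq, ← HH_id]
  apply HH_congr
  rintro ⟨a, b⟩ ⟨c, d⟩
  simp only [Prod.mk.injEq]
  constructor
  · rintro ⟨rfl, h⟩; simpa using h
  · rintro ⟨rfl, rfl⟩; simp

lemma ent_le_conv {p q : G → ℝ} (hp : IsP p) (hq : IsP q) : ent q ≤ ent (conv p q) := by
  have h1 := HH_subadd (tp_isP hp hq) (fun ω => ω.1) (fun ω => ω.1 + ω.2)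
  rw [HH_add_pair hp hq, HH_fst hq (fun ω => ω), HH_id, ← ent_conv] at h1
  linarith

lemma ent_le_conv' {p q : G → ℝ} (hp : IsP p) (hq : IsP q) : ent p ≤ ent (conv p q) := by
  rw [conv_comm]; exact ent_le_conv hq hp

/-- Kaimanovich–Vershik -/
lemma KV {y x z : G → ℝ} (hy : IsP y) (hx : IsP x) (hz : IsP z) :
    ent (conv y (conv x z)) + ent x ≤ ent (conv y x) + ent (conv x z) := by
  set P := tp y (tp x z) with hPd
  have hP : IsP P := tp_isP hy (tp_isP hx hz)
  have h := HH_submod hP (fun ω => ω.1) (fun ω => ω.2.2) (fun ω => ω.1 + (ω.2.1 + ω.2.2))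
  have h1 : HH P (fun ω => (ω.1, ω.2.2, ω.1 + (ω.2.1 + ω.2.2))) = ent y + (ent x + ent z) := by
    rw [← ent_tp hx hz, ← ent_tp hy (tp_isP hx hz), ← HH_id]
    apply HH_congr
    rintro ⟨a, b, c⟩ ⟨a', b', c'⟩
    simp only [Prod.mk.injEq]
    constructor
    · rintro ⟨rfl, rfl, h⟩
      have : b = b' := by simpa using h
      simp [this]
    · rintro ⟨rfl, rfl, rfl⟩; simp
  have h2 : HH P (fun ω => ω.1 + (ω.2.1 + ω.2.2)) = ent (conv y (conv x z)) := by
    unfold HH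
    congr 1
    rw [conv, conv, ← push_id y, ← push_tp, push_push]
  have h3 : HH P (fun ω => (ω.1, ω.1 + (ω.2.1 + ω.2.2))) = ent y + ent (conv x z) := by
    rw [ent_conv x z, ← HH_id y, ← HH_tp hy (tp_isP hx hz)]
    apply HH_congr
    rintro ⟨a, b, c⟩ ⟨a', b', c'⟩
    simp only [Prod.mk.injEq]
    constructor
    · rintro ⟨rfl, h⟩; simpa using h
    · rintro ⟨rfl, h⟩; simpa using h
  have h4 : HH P (fun ω => (ω.2.2, ω.1 + (ω.2.1 + ω.2.2))) = ent z + ent (conv y x) := by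
    have e : HH P (fun ω => (ω.2.2, ω.1 + (ω.2.1 + ω.2.2))) =
        HH P (fun ω => (ω.1 + ω.2.1, ω.2.2)) := by
      apply HH_congr
      rintro ⟨a, b, c⟩ ⟨a', b', c'⟩
      simp only [Prod.mk.injEq]
      constructor
      · rintro ⟨rfl, h⟩; rw [← add_assoc, ← add_assoc] at h; simpa using h
      · rintro ⟨h, rfl⟩; rw [← add_assoc, ← add_assoc, h]; simp
    rw [e]
    have := HH_equiv (p := P) (p' := tp (tp y x) z) (Equiv.prodAssoc G G G).symm
      (fun ω => by simp [tp, hPd, mul_assoc]) (fun ω => (ω.1.1 + ω.1.2, ω.2))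
    simp only [Equiv.prodAssoc_symm_apply] at this
    rw [this, HH_tp (tp_isP hy hx) hz (fun ω => ω.1 + ω.2) (fun ω => ω), HH_id, ← ent_conv]
    ring
  linarith

lemma CI_tp {p : Ω → ℝ} {q : Ω' → ℝ} (hp : IsP p) (hq : IsP q) (X : Ω → α) (Z : Ω → ζ)
    (Y : Ω' → β) (W : Ω' → ζ') :
    CI (tp p q) (fun ω => X ω.1) (fun ω => Y ω.2) (fun ω => (Z ω.1, W ω.2)) := by
  classical
  rintro a b ⟨z, w⟩
  have e1 : push (tp p q) (fun ω => (X ω.1, Y ω.2, Z ω.1, W ω.2)) (a, b, z, w) =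
      push p (fun ω => (X ω, Z ω)) (a, z) * push q (fun ω => (Y ω, W ω)) (b, w) := by
    have := push_tp (p := p) (q := q) (fun ω => (X ω, Z ω)) (fun ω => (Y ω, W ω))
    have := congrFun this ((a, z), (b, w))
    simp only [tp] at this
    rw [← this]
    unfold push
    refine Finset.sum_congr rfl fun ω _ => ?_
    congr 1
    simp only [Prod.mk.injEq, eq_iff_iff]; tauto
  have e2 : push (tp p q) (fun ω => (X ω.1, Z ω.1, W ω.2)) (a, z, w) =
      push p (fun ω => (X ω, Z ω)) (a, z) * push q W w := by
    have := push_tp (p := p) (q := q) (fun ω => (X ω, Z ω)) W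
    have := congrFun this ((a, z), w)
    simp only [tp] at this
    rw [← this]
    unfold push
    refine Finset.sum_congr rfl fun ω _ => ?_
    congr 1
    simp only [Prod.mk.injEq, eq_iff_iff]; tauto
  have e3 : push (tp p q) (fun ω => (Y ω.2, Z ω.1, W ω.2)) (b, z, w) =
      push p Z z * push q (fun ω => (Y ω, W ω)) (b, w) := by
    have := push_tp (p := p) (q := q) Z (fun ω => (Y ω, W ω))
    have := congrFun this (z, (b, w))
    simp only [tp] at this
    rw [← this]
    unfold push
    refine Finset.sum_congr rfl fun ω _ => ?_
    congr 1
    simp only [Prod.mk.injEq, eq_iff_iff]; tauto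
  rw [e1, e2, e3, push_tp]
  simp only [tp]
  ring

noncomputable def tau (y1 y2 a b : G → ℝ) : ℝ :=
  ent (conv a b) - ent a / 2 - ent b / 2 + 1 / 20 * (ent (conv y1 a) - ent a / 2)
    + 1 / 20 * (ent (conv y2 b) - ent b / 2)

lemma isP_iff (p : G → ℝ) : IsP p ↔ p ∈ stdSimplex ℝ G :=
  ⟨fun h => ⟨h.nonneg, h.sum⟩, fun h => ⟨h.1, h.2⟩⟩

lemma continuous_ent : Continuous (fun p : G → ℝ => ent p) := by
  unfold ent
  exact continuous_finsetSum _ fun a _ => continuous_negMulLog.comp (continuous_apply a)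

lemma continuous_conv : Continuous (fun p : (G → ℝ) × (G → ℝ) => conv p.1 p.2) := by
  refine continuous_pi fun g => ?_
  simp_rw [conv_apply]
  fun_prop

lemma exists_min (y1 y2 : G → ℝ) : ∃ x1 x2 : G → ℝ, IsP x1 ∧ IsP x2 ∧
    ∀ a b, IsP a → IsP b → tau y1 y2 x1 x2 ≤ tau y1 y2 a b := by
  classical
  have hc : IsCompact (stdSimplex ℝ G ×ˢ stdSimplex ℝ G) :=
    (isCompact_stdSimplex ℝ G).prod (isCompact_stdSimplex ℝ G)
  have hne : (stdSimplex ℝ G ×ˢ stdSimplex ℝ G).Nonempty :=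
    ⟨(Pi.single 0 1, Pi.single 0 1), single_mem_stdSimplex ℝ 0, single_mem_stdSimplex ℝ 0⟩
  have hcont : Continuous (fun w : (G → ℝ) × (G → ℝ) => tau y1 y2 w.1 w.2) := by
    unfold tau
    have c1 : Continuous (fun w : (G → ℝ) × (G → ℝ) => ent w.1) :=
      continuous_ent.comp continuous_fst
    have c2 : Continuous (fun w : (G → ℝ) × (G → ℝ) => ent w.2) :=
      continuous_ent.comp continuous_snd
    have c3 : Continuous (fun w : (G → ℝ) × (G → ℝ) => ent (conv w.1 w.2)) :=
      continuous_ent.comp continuous_conv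
    have c4 : Continuous (fun w : (G → ℝ) × (G → ℝ) => ent (conv y1 w.1)) :=
      continuous_ent.comp (continuous_conv.comp (continuous_const.prodMk continuous_fst))
    have c5 : Continuous (fun w : (G → ℝ) × (G → ℝ) => ent (conv y2 w.2)) :=
      continuous_ent.comp (continuous_conv.comp (continuous_const.prodMk continuous_snd))
    fun_prop
  obtain ⟨⟨x1, x2⟩, ⟨h1, h2⟩, hm⟩ := hc.exists_isMinOn hne hcont.continuousOn
  refine ⟨x1, x2, (isP_iff _).2 h1, (isP_iff _).2 h2, fun a b ha hb => ?_⟩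
  exact hm (a := (a, b)) ⟨(isP_iff _).1 ha, (isP_iff _).1 hb⟩

def e1 : (G × G) × (G × G) ≃ (G × G) × (G × G) where
  toFun ω := ((ω.1.1, ω.2.1), (ω.1.2, ω.2.2))
  invFun ω := ((ω.1.1, ω.2.1), (ω.1.2, ω.2.2))
  left_inv _ := rfl
  right_inv _ := rfl

def e2 : (G × G) × (G × G) ≃ (G × G) × (G × G) where
  toFun ω := ((ω.1.1, ω.2.2), (ω.2.1, ω.1.2))
  invFun ω := ((ω.1.1, ω.2.2), (ω.2.1, ω.1.2))
  left_inv _ := rfl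
  right_inv _ := rfl

set_option maxHeartbeats 1000000 in
lemma tau_min_zero (h2 : ∀ x : G, x + x = 0) {y1 y2 x1 x2 : G → ℝ} (hy1 : IsP y1) (hy2 : IsP y2)
    (hx1 : IsP x1) (hx2 : IsP x2)
    (hmin : ∀ a b, IsP a → IsP b → tau y1 y2 x1 x2 ≤ tau y1 y2 a b) :
    ent (conv x1 x2) ≤ ent x1 / 2 + ent x2 / 2 := by
  -- coordinates ((a,d),(b,c)) with a,c ~ x1 and b,d ~ x2
  set P := tp (tp x1 x2) (tp x2 x1) with hPd
  have h12 := tp_isP hx1 hx2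
  have h21 := tp_isP hx2 hx1
  have hP : IsP P := tp_isP h12 h21
  set h := ent (conv x1 x2) with hh
  have hh' : ent (conv x2 x1) = h := by rw [conv_comm]
  set S : (G × G) × (G × G) → G := fun ω => (ω.1.1 + ω.1.2) + (ω.2.1 + ω.2.2) with hS
  set U : (G × G) × (G × G) → G := fun ω => ω.1.1 + ω.2.1 with hU
  set V : (G × G) × (G × G) → G := fun ω => ω.2.1 + ω.2.2 with hV
  have pS : push P S = conv (conv x1 x2) (conv x2 x1) := by
    exact (conv_push2 (tp x1 x2) (tp x2 x1) (fun ω => ω.1 + ω.2) (fun ω => ω.1 + ω.2)).symm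
  have pS' : push P S = conv (conv x1 x1) (conv x2 x2) := by
    refine Eq.trans ?_ (conv_push2 (tp x1 x1) (tp x2 x2) (fun ω => ω.1 + ω.2) (fun ω => ω.1 + ω.2)).symm
    rw [← push_equiv (p := P) (p' := tp (tp x1 x1) (tp x2 x2)) e2
      (fun ω => by simp only [tp, hPd, e2, Equiv.coe_fn_mk]; ring)]
    congr 1
    funext ω
    simp only [hS, e2, Equiv.coe_fn_mk]
    abel
  have pU : push P U = conv x1 x2 := by
    have := push_equiv (p := P) (p' := P) e1
      (fun ω => by simp only [tp, hPd, e1, Equiv.coe_fn_mk]; ring) (fun ω => ω.1.1 + ω.1.2)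
    exact this.trans (push_fst (p := tp x1 x2) h21 (fun ω : G × G => ω.1 + ω.2))
  have pV : push P V = conv x2 x1 := push_snd (q := tp x2 x1) h12 (fun ω : G × G => ω.1 + ω.2)
  set s := ent (push P S) with hs
  set t := HH P (fun ω => (U ω, V ω, S ω)) with ht
  set a' := ent (conv x1 x1) with ha'
  set b' := ent (conv x2 x2) with hb'
  have hVS0 : HH P (fun ω => (ω.1.1 + ω.1.2, ω.2.1 + ω.2.2)) = 2 * h := by
    rw [HH_tp h12 h21 (fun ω => ω.1 + ω.2) (fun ω => ω.1 + ω.2), ← ent_conv, ← ent_conv, hh']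
    ring
  have hVS : HH P (fun ω => (V ω, S ω)) = 2 * h := by
    rw [← hVS0]
    apply HH_congr
    rintro ⟨⟨a, d⟩, b, c⟩ ⟨⟨a', d'⟩, b', c'⟩
    simp only [Prod.mk.injEq, hV, hS]
    constructor
    · rintro ⟨h1, h2⟩; rw [h1] at h2; exact ⟨by simpa using h2, h1⟩
    · rintro ⟨h1, h2⟩; rw [h1, h2]; simp
  have hUS : HH P (fun ω => (U ω, S ω)) = 2 * h := by
    rw [← hVS0, ← HH_equiv (p := P) (p' := P) e1
      (fun ω => by simp only [tp, hPd, e1, Equiv.coe_fn_mk]; ring)]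
    apply HH_congr
    rintro ⟨⟨a, d⟩, b, c⟩ ⟨⟨a', d'⟩, b', c'⟩
    simp only [Prod.mk.injEq, hU, hS, e1, Equiv.coe_fn_mk]
    rw [show a + b + (d + c) = (a + d) + (b + c) by abel,
      show a' + b' + (d' + c') = (a' + d') + (b' + c') by abel]
    constructor
    · rintro ⟨h1, h2⟩; rw [h1] at h2; exact ⟨h1, by simpa using h2⟩
    · rintro ⟨h1, h2⟩; rw [h1, h2]; simp
  have hWS : HH P (fun ω => (U ω + V ω, S ω)) = a' + b' := by
    rw [ha', hb', ent_conv, ent_conv, ← HH_tp (tp_isP hx1 hx1) (tp_isP hx2 hx2)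
      (fun ω => ω.1 + ω.2) (fun ω => ω.1 + ω.2)]
    rw [← HH_equiv (p := P) (p' := tp (tp x1 x1) (tp x2 x2)) e2
      (fun ω => by simp only [tp, hPd, e2, Equiv.coe_fn_mk]; ring)]
    apply HH_congr
    rintro ⟨⟨a, d⟩, b, c⟩ ⟨⟨a', d'⟩, b', c'⟩
    simp only [Prod.mk.injEq, hU, hV, hS, e2, Equiv.coe_fn_mk]
    rw [show a + d + (b + c) = (a + c) + (b + d) by abel,
      show a' + d' + (b' + c') = (a' + c') + (b' + d') by abel,
      show a + b + (b + c) = (a + c) + (b + b) by abel,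
      show a' + b' + (b' + c') = (a' + c') + (b' + b') by abel, h2, h2, add_zero, add_zero]
    constructor
    · rintro ⟨h1, h2⟩; rw [h1] at h2; exact ⟨h1, by simpa using h2⟩
    · rintro ⟨h1, h2⟩; rw [h1, h2]; simp
  -- E0
  have E0 : s + t ≤ 4 * h := by
    have := HH_submod hP U V S
    rw [hUS, hVS] at this
    have hs' : HH P S = s := rfl
    rw [hs'] at this
    linarith
  have kv1 := KV hy1 hx1 hx2
  have kv2 := KV hy2 hx2 hx1
  have kv3 := KV hy1 hx1 hx1
  have kv4 := KV hy2 hx2 hx2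
  rw [hh'] at kv2
  -- E1
  have E1 := hmin _ _ (conv_isP hx1 hx2) (conv_isP hx2 hx1)
  unfold tau at E1
  rw [← pS, ← hs, hh'] at E1
  -- E3
  have E3 := hmin _ _ (conv_isP hx1 hx1) (conv_isP hx2 hx2)
  unfold tau at E3
  rw [← pS', ← hs] at E3
  -- E2
  obtain ⟨a2, b2, ha2, hb2, -, hle2⟩ := select hP (fun ω => ω.1.1) (fun ω => ω.2.1)
    (fun ω => (ω.1.1 + ω.1.2, ω.2.1 + ω.2.2))
    (CI_tp h12 h21 (fun ω => ω.1) (fun ω => ω.1 + ω.2) (fun ω => ω.1) (fun ω => ω.1 + ω.2))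
    hy1 hy2 1 (-1 / 2 - 1 / 40) (-1 / 2 - 1 / 40) (1 / 20) (1 / 20) (by norm_num) (by norm_num)
  have E2 := hmin _ _ ha2 hb2
  unfold tau at E2
  have t2 : HH P (fun ω => (ω.1.1 + ω.2.1, ω.1.1 + ω.1.2, ω.2.1 + ω.2.2)) = t := by
    apply HH_congr
    rintro ⟨⟨a, d⟩, b, c⟩ ⟨⟨a', d'⟩, b', c'⟩
    simp only [Prod.mk.injEq, hU, hV, hS]
    constructor
    · rintro ⟨h1, h2, h3⟩; exact ⟨h1, h3, by rw [h2, h3]⟩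
    · rintro ⟨h1, h2, h3⟩; rw [h2] at h3; exact ⟨h1, by simpa using h3, h2⟩
  have t2a : HH P (fun ω => (ω.1.1, ω.1.1 + ω.1.2, ω.2.1 + ω.2.2)) = ent x1 + ent x2 + h := by
    rw [← HH_add_pair hx1 hx2, ← hh', ent_conv x2 x1, ← HH_tp h12 h21 (fun ω => (ω.1, ω.1 + ω.2))]
    apply HH_congr; intro ω ω'; simp only [Prod.mk.injEq]; tauto
  have t2b : HH P (fun ω => (ω.2.1, ω.1.1 + ω.1.2, ω.2.1 + ω.2.2)) = ent x1 + ent x2 + h := by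
    have : ent x1 + ent x2 + h = h + (ent x2 + ent x1) := by ring
    rw [this, ← HH_add_pair hx2 hx1, hh, ent_conv x1 x2,
      ← HH_tp h12 h21 (fun ω => ω.1 + ω.2) (fun ω => (ω.1, ω.1 + ω.2))]
    apply HH_congr; intro ω ω'; simp only [Prod.mk.injEq]; tauto
  have p2a : push P (fun ω => ω.1.1) = x1 := by
    exact (push_fst (p := tp x1 x2) h21 (fun ω : G × G => ω.1)).trans
      ((push_fst hx2 (fun ω => ω)).trans (push_id _))
  have p2b : push P (fun ω => ω.2.1) = x2 := by
    exact (push_snd (q := tp x2 x1) h12 (fun ω : G × G => ω.1)).trans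
      ((push_fst hx1 (fun ω => ω)).trans (push_id _))
  rw [t2, t2a, t2b, p2a, p2b, hVS0] at hle2
  -- E4
  set q := push P (fun ω => (U ω, V ω, S ω)) with hq
  have hqP : IsP q := push_isP hP _
  obtain ⟨a4, b4, ha4, hb4, -, hle4⟩ := bsg h2 hqP hy1 hy2 1 (-1 / 2 - 1 / 40) (-1 / 2 - 1 / 40)
    (1 / 20) (1 / 20) (by norm_num) (by norm_num) (by norm_num)
  have E4 := hmin _ _ ha4 hb4
  unfold tau at E4
  have q1 : HH q (fun ω => (ω.1 + ω.2.1, ω.2.2)) = a' + b' := by rw [hq, HH_push, hWS]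
  have q2 : HH q (fun ω => (ω.1, ω.2.2)) = 2 * h := by rw [hq, HH_push, hUS]
  have q3 : HH q (fun ω => (ω.2.1, ω.2.2)) = 2 * h := by rw [hq, HH_push, hVS]
  have q4 : HH q (fun ω => ω.2.2) = s := by rw [hq, HH_push, hs]; rfl
  have q5 : ent q = t := rfl
  have q6 : push q (fun ω => ω.1) = conv x1 x2 := by rw [hq, push_push, pU]
  have q7 : push q (fun ω => ω.2.1) = conv x2 x1 := by rw [hq, push_push, pV]
  rw [q1, q2, q3, q4, q5, q6, q7] at hle4
  by_contra hcon
  push Not at hcon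
  unfold tau at hmin
  clear_value h s t a' b'
  linarith

end pfr
end part3

section part4
open Finset Real
set_option linter.unusedSectionVars false
set_option linter.unusedVariables false

section pfr2
variable {G : Type} [AddCommGroup G] [Fintype G]

lemma sum_shift (f : G → ℝ) (a : G) : ∑ g, f (g - a) = ∑ g, f g :=
  Fintype.sum_equiv (Equiv.subRight a) _ _ (fun _ => rfl)

lemma conv_eq_of_ent {p q : G → ℝ} (hp : IsP p) (hq : IsP q) (h : ent (conv p q) = ent q)
    {a : G} (ha : p a ≠ 0) (g : G) : q (g - a) = conv p q g := by
  have hJ : ∀ g, ∑ a, p a • negMulLog (q (g - a)) ≤ negMulLog (∑ a, p a • q (g - a)) := fun g =>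
    concaveOn_negMulLog.le_map_sum (fun a _ => hp.nonneg a) hp.sum (fun a _ => hq.nonneg _)
  have hsum : ∑ g, ∑ a, p a • negMulLog (q (g - a)) = ∑ g, negMulLog (∑ a, p a • q (g - a)) := by
    have e1 : ∑ g, negMulLog (∑ a, p a • q (g - a)) = ent (conv p q) := by
      unfold ent
      simp only [conv_apply, smul_eq_mul]
    rw [e1, h, Finset.sum_comm]
    simp only [smul_eq_mul, ← Finset.mul_sum]
    have : ∀ a, ∑ i, negMulLog (q (i - a)) = ent q := fun a => sum_shift (fun g => negMulLog (q g)) a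
    simp only [this, ← Finset.sum_mul, hp.sum, one_mul]
  have heq := (Finset.sum_eq_sum_iff_of_le (fun g _ => hJ g)).1 hsum g (mem_univ g)
  have := (strictConcaveOn_negMulLog.map_sum_eq_iff' (fun a _ => hp.nonneg a) hp.sum
    (fun a _ => hq.nonneg (g - a))).1 heq.symm a (mem_univ a) ha
  rw [this, conv_apply]
  rfl

open scoped Classical in
def IsU (H : AddSubgroup G) (w : G) (u : G → ℝ) : Prop :=
  ∀ g, u g = if g - w ∈ H then ((#{h : G | h ∈ H} : ℕ) : ℝ)⁻¹ else 0

lemma isP_exists_ne {p : G → ℝ} (hp : IsP p) : ∃ a, p a ≠ 0 := by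
  by_contra h
  push Not at h
  have := hp.sum
  simp [h] at this

lemma exists_coset {x1 x2 : G → ℝ} (h1 : IsP x1) (h2 : IsP x2)
    (h : ent (conv x1 x2) ≤ ent x1 / 2 + ent x2 / 2) : ∃ H w, IsU H w x1 := by
  classical
  have l1 := ent_le_conv h1 h2
  have l2 := ent_le_conv' h1 h2
  have E1 : ent (conv x1 x2) = ent x2 := by linarith
  have E2 : ent (conv x2 x1) = ent x1 := by rw [conv_comm]; linarith
  have A : ∀ u, x1 u ≠ 0 → ∀ g, x2 (g - u) = conv x1 x2 g := fun u hu g => conv_eq_of_ent h1 h2 E1 hu g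
  have B : ∀ v, x2 v ≠ 0 → ∀ g, x1 (g - v) = conv x1 x2 g := fun u hu g => by
    rw [conv_comm x1 x2]; exact conv_eq_of_ent h2 h1 E2 hu g
  obtain ⟨w, hw⟩ := isP_exists_ne h1
  obtain ⟨z, hz⟩ := isP_exists_ne h2
  have C : ∀ u, x1 u ≠ 0 → x1 u = x2 z := fun u hu => by
    have a := A u hu (u + z)
    have b := B z hz (u + z)
    rw [add_sub_cancel_left] at a
    rw [add_sub_cancel_right] at b
    rw [a, b]
  have D : ∀ u u', x1 u ≠ 0 → x1 u' ≠ 0 → x1 (u + u' - w) ≠ 0 := fun u u' hu hu' => by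
    -- z + u' - w in supp x2
    have hv : x2 (z + u' - w) ≠ 0 := by
      have a := A w hw (z + u')
      have b := A u' hu' (z + u')
      rw [add_sub_cancel_right] at b
      rw [a, ← b]; exact hz
    have a := B z hz (u + u' - w + z)
    have b := B _ hv (u + u' - w + z)
    rw [add_sub_cancel_right] at a
    rw [show u + u' - w + z - (z + u' - w) = u by abel] at b
    rw [a, ← b]; exact hu
  have hfin : ∀ (n : ℕ) (u : G), x1 (w + u) ≠ 0 → x1 (w + n • u) ≠ 0 := by
    intro n u hu
    induction n with
    | zero => simpa using hw
    | succ k ih =>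
      have := D _ _ ih hu
      rwa [show w + k • u + (w + u) - w = w + (k + 1) • u by rw [add_smul, one_smul]; abel] at this
  let H : AddSubgroup G :=
    { carrier := {h | x1 (w + h) ≠ 0}
      zero_mem' := by simpa using hw
      add_mem' := by
        intro a b ha hb
        have := D _ _ ha hb
        rwa [show w + a + (w + b) - w = w + (a + b) by abel] at this
      neg_mem' := by
        intro a ha
        have := hfin (addOrderOf a - 1) a ha
        have hpos := addOrderOf_pos a
        rwa [show (addOrderOf a - 1) • a = -a by
          rw [eq_neg_iff_add_eq_zero]
          rw [← succ_nsmul, Nat.sub_add_cancel hpos, addOrderOf_nsmul_eq_zero]] at this }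
  have memH : ∀ g, g ∈ H ↔ x1 (w + g) ≠ 0 := fun g => Iff.rfl
  refine ⟨H, w, fun g => ?_⟩
  have key : ∀ g, x1 g = if g - w ∈ H then x2 z else 0 := fun g => by
    split_ifs with hg
    · rw [memH, add_sub_cancel] at hg; exact C g hg
    · rw [memH, add_sub_cancel, not_not] at hg; exact hg
  have hs := h1.sum
  simp only [key] at hs
  rw [sum_shift (fun g => if g ∈ H then x2 z else 0) w, ← Finset.sum_filter, Finset.sum_const,
    nsmul_eq_mul] at hs
  rw [key g]
  split_ifs with hg
  · exact eq_inv_of_mul_eq_one_right hs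
  · rfl

open scoped Classical in
lemma cardH_pos (H : AddSubgroup G) : 0 < #{h : G | h ∈ H} :=
  Finset.card_pos.2 ⟨0, by simp [H.zero_mem]⟩

open scoped Classical in
lemma ent_IsU {H : AddSubgroup G} {w : G} {u : G → ℝ} (hu : IsU H w u) :
    ent u = log (#{h : G | h ∈ H} : ℕ) := by
  unfold ent
  have hp : (0 : ℝ) < (#{h : G | h ∈ H} : ℕ) := by exact_mod_cast cardH_pos H
  simp only [hu _]
  rw [sum_shift (fun g => negMulLog (if g ∈ H then ((#{h : G | h ∈ H} : ℕ) : ℝ)⁻¹ else 0)) w]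
  simp only [apply_ite negMulLog, negMulLog_zero]
  rw [← Finset.sum_filter, Finset.sum_const, nsmul_eq_mul, negMulLog, log_inv]
  field_simp

open scoped Classical in
lemma coset_count {H : AddSubgroup G} {w : G} {u y : G → ℝ} (hu : IsU H w u) (hup : IsP u)
    (hy : IsP y) (S : Finset G) (hS : ∀ g, y g ≠ 0 → g ∈ S) :
    ∃ z, 0 < #{x ∈ S | x - z ∈ H} ∧
      log (#{h : G | h ∈ H} : ℕ) + ent y - ent (conv y u) ≤ log (#{x ∈ S | x - z ∈ H} : ℕ) := by
  obtain ⟨z, -, hz⟩ := Finset.exists_max_image (univ : Finset G)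
    (fun z => #{x ∈ S | x - z ∈ H}) ⟨0, mem_univ _⟩
  set K : ℝ := ((#{h : G | h ∈ H} : ℕ) : ℝ) with hK
  set M : ℝ := ((#{x ∈ S | x - z ∈ H} : ℕ) : ℝ) with hM
  have hKp : 0 < K := by rw [hK]; exact_mod_cast cardH_pos H
  have hpos : 0 < #{x ∈ S | x - z ∈ H} := by
    obtain ⟨a, ha⟩ := isP_exists_ne hy
    refine lt_of_lt_of_le (Finset.card_pos.2 ⟨a, ?_⟩) (hz a (mem_univ a))
    simp [hS a ha, H.zero_mem]
  have hMp : 0 < M := by rw [hM]; exact_mod_cast hpos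
  refine ⟨z, hpos, ?_⟩
  have hm : ∀ x, conv y u (x + w) = K⁻¹ * ∑ a, if x - a ∈ H then y a else 0 := fun x => by
    rw [conv_apply, Finset.mul_sum]
    refine Finset.sum_congr rfl fun a _ => ?_
    rw [hu, show x + w - a - w = x - a by abel]
    split_ifs <;> ring
  have hmH : ∀ x h, h ∈ H → conv y u (x + h + w) = conv y u (x + w) := fun x h hh => by
    rw [hm, hm]
    congr 1
    refine Finset.sum_congr rfl fun a _ => ?_
    rw [show x + h - a = (x - a) + h by abel, H.add_mem_cancel_right hh]
  have hmpos : ∀ x, 0 < y x → 0 < conv y u (x + w) := fun x hx => by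
    rw [hm]
    refine mul_pos (inv_pos.2 hKp) (lt_of_lt_of_le hx ?_)
    have := Finset.single_le_sum (f := fun a => if x - a ∈ H then y a else 0)
      (fun a _ => by split_ifs <;> simp [hy.nonneg]) (mem_univ x)
    simpa [H.zero_mem] using this
  -- entropy of conv
  have hent : ent (conv y u) = - ∑ x, y x * log (conv y u (x + w)) := by
    have e := push_sum_mul (tp y u) (fun ω => ω.1 + ω.2) (fun g => log (conv y u g))
    have e' : ∑ a, conv y u a * log (conv y u a) = ∑ ω, tp y u ω * log (conv y u (ω.1 + ω.2)) := e
    unfold ent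
    simp only [negMulLog, neg_mul, Finset.sum_neg_distrib]
    rw [e', Fintype.sum_prod_type]
    congr 1
    refine Finset.sum_congr rfl fun a _ => ?_
    have : ∀ b, tp y u (a, b) * log (conv y u (a + b)) = y a * log (conv y u (a + w)) * u b := by
      intro b
      simp only [tp]
      rw [hu b]
      split_ifs with hb
      · have := hmH a (b - w) hb
        rw [show a + (b - w) + w = a + b by abel] at this
        rw [this]; ring
      · simp
    simp only [this]
    rw [← Finset.mul_sum, hup.sum, mul_one]
  have hg := gibbs hy (fun x => K * conv y u (x + w) / (y x * M))
    (fun x hx => by have := hmpos x hx; positivity) (by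
      have : ∀ x, y x * (K * conv y u (x + w) / (y x * M)) ≤
          M⁻¹ * ∑ a, if x ∈ S ∧ x - a ∈ H then y a else 0 := by
        intro x
        by_cases hx : y x = 0
        · rw [hx, zero_mul]
          exact mul_nonneg (inv_nonneg.2 hMp.le)
            (Finset.sum_nonneg fun a _ => by split_ifs <;> simp [hy.nonneg])
        · have : y x * (K * conv y u (x + w) / (y x * M)) = M⁻¹ * (K * conv y u (x + w)) := by
            field_simp
          rw [this, hm, mul_inv_cancel_left₀ hKp.ne']
          simp [hS x hx]
      refine (Finset.sum_le_sum fun x _ => this x).trans ?_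
      rw [← Finset.mul_sum, Finset.sum_comm, inv_mul_le_iff₀ hMp, mul_one]
      have h3 : ∀ a, (∑ x, if x ∈ S ∧ x - a ∈ H then y a else 0) ≤ y a * M := fun a => by
        rw [← Finset.sum_filter, Finset.sum_const, nsmul_eq_mul, mul_comm]
        refine mul_le_mul_of_nonneg_left ?_ (hy.nonneg a)
        rw [hM]
        have := hz a (mem_univ a)
        have h4 : #{x : G | x ∈ S ∧ x - a ∈ H} = #{x ∈ S | x - a ∈ H} := by
          congr 1; ext; simp
        rw [h4]; exact_mod_cast this
      refine (Finset.sum_le_sum fun a _ => h3 a).trans ?_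
      rw [← Finset.sum_mul, hy.sum, one_mul])
  have hl : ∑ x, y x * log (K * conv y u (x + w) / (y x * M)) =
      ∑ x, (y x * log K + y x * log (conv y u (x + w)) + negMulLog (y x) - y x * log M) := by
    refine Finset.sum_congr rfl fun x _ => ?_
    rcases (hy.nonneg x).eq_or_lt with hx | hx
    · simp [← hx]
    · have := hmpos x hx
      rw [log_div (by positivity) (by positivity), log_mul (by positivity) (by positivity),
        log_mul (by positivity) (by positivity), negMulLog]
      ring
  rw [hl] at hg
  simp only [Finset.sum_sub_distrib, Finset.sum_add_distrib, ← Finset.sum_mul, hy.sum, one_mul] at hg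
  have hey : ent y = ∑ x, negMulLog (y x) := rfl
  rw [hent, hey]
  linarith

open scoped Classical in
lemma pfr_pair (h2 : ∀ x : G, x + x = 0) {a b : G → ℝ} (ha : IsP a) (hb : IsP b)
    (S : Finset G) (hS : ∀ g, a g ≠ 0 → g ∈ S) :
    ∃ (H : AddSubgroup G) (z : G), 0 < #{x ∈ S | x - z ∈ H} ∧
      23 * ent a + 22 * ent b - 44 * ent (conv a b) ≤
        2 * log (#{x ∈ S | x - z ∈ H} : ℕ) - log (#{h : G | h ∈ H} : ℕ) := by
  obtain ⟨x1, x2, hx1, hx2, hmin⟩ := exists_min a b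
  have h0 := tau_min_zero h2 ha hb hx1 hx2 hmin
  obtain ⟨H, w, hU⟩ := exists_coset hx1 hx2 h0
  obtain ⟨z, hz, hle⟩ := coset_count hU hx1 ha S hS
  refine ⟨H, z, hz, ?_⟩
  have hm := hmin b a hb ha
  unfold tau at hm
  rw [conv_comm b a] at hm
  have l1 := ent_le_conv hx1 hx2
  have l2 := ent_le_conv' hx1 hx2
  have l3 := ent_le_conv hb hx2
  have l4 := ent_le_conv' hb hx2
  have he := ent_IsU hU
  rw [← he] at hle ⊢
  linarith

lemma log_final {Q K m s' s : ℝ} (hQ : 0 < Q) (hK : 0 < K) (hm : 0 < m) (hs' : 0 < s')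
    (hs : 0 < s) (h : 133 * log Q + log K ≤ 2 * log m + 89 * log s' + 176 * log s) :
    Q ^ 133 * K ≤ m ^ 2 * s' ^ 89 * s ^ 176 := by
  have p1 := pow_pos hQ 133
  have p2 := pow_pos hm 2
  have p3 := pow_pos hs' 89
  have p4 := pow_pos hs 176
  have hlog : log (Q ^ 133 * K) ≤ log (m ^ 2 * s' ^ 89 * s ^ 176) := by
    rw [log_mul p1.ne' hK.ne', log_mul (mul_pos p2 p3).ne' p4.ne', log_mul p2.ne' p3.ne',
      log_pow, log_pow, log_pow, log_pow]
    push_cast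
    exact h
  exact (log_le_log_iff (mul_pos p1 hK) (mul_pos (mul_pos p2 p3) p4)).1 hlog

open scoped Classical in
lemma pfr_comb (h2 : ∀ x : G, x + x = 0) (S S' : Finset G) (P0 : Finset (G × G))
    (hP : ∀ w ∈ P0, w.1 ∈ S ∧ w.2 ∈ S ∧ w.1 + w.2 ∈ S') (hne : P0.Nonempty) :
    ∃ (H : AddSubgroup G) (z : G),
      (#P0 : ℝ) ^ 133 * (#{h : G | h ∈ H} : ℕ) ≤
        (#{x ∈ S | x - z ∈ H} : ℝ) ^ 2 * (#S' : ℝ) ^ 89 * (#S : ℝ) ^ 176 := by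
  set Q : ℝ := ((#P0 : ℕ) : ℝ) with hQ
  have hQp : 0 < Q := by rw [hQ]; exact_mod_cast hne.card_pos
  set q : G × G × Unit → ℝ := fun w => if (w.1, w.2.1) ∈ P0 then Q⁻¹ else 0 with hq
  have hsum : ∀ f : ℝ → ℝ, f 0 = 0 → ∑ w, f (q w) = Q * f Q⁻¹ := fun f hf => by
    have : ∀ w : G × G × Unit, f (q w) = if (w.1, w.2.1) ∈ P0 then f Q⁻¹ else 0 := fun w => by
      simp only [hq]; split_ifs <;> simp [hf]
    simp only [this]
    rw [Fintype.sum_prod_type]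
    simp only [Fintype.sum_prod_type, Finset.univ_unique, Finset.sum_singleton]
    rw [← Fintype.sum_prod_type (f := fun w : G × G => if w ∈ P0 then f Q⁻¹ else 0)]
    simp [hQ]
  have hqP : IsP q := ⟨fun w => by simp only [hq]; split_ifs <;> positivity, by
    rw [hsum (fun x => x) rfl, mul_inv_cancel₀ hQp.ne']⟩
  have hqe : ent q = log Q := by
    unfold ent
    rw [hsum negMulLog negMulLog_zero, negMulLog, log_inv]; field_simp
  have hqs : ∀ w, q w ≠ 0 → (w.1, w.2.1) ∈ P0 := fun w hw => by
    by_contra h; simp [hq, h] at hw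
  have hpush : ∀ {α : Type} [Fintype α] (X : G × G × Unit → α) (T : Finset α),
      (∀ w, (w.1, w.2.1) ∈ P0 → X w ∈ T) → ∀ a, push q X a ≠ 0 → a ∈ T := by
    intro α _ X T hT a ha
    unfold push at ha
    obtain ⟨w, -, hw⟩ := Finset.exists_ne_zero_of_sum_ne_zero ha
    split_ifs at hw with h
    · rw [← h]; exact hT _ (hqs _ hw)
    · simp at hw
  have hu : ∀ {α : Type} [Fintype α] (X : G × G × Unit → α),
      HH q (fun w => (X w, w.2.2)) = HH q X := fun X => HH_congr (fun _ _ => by simp)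
  have hS0 : HH q (fun w => w.2.2) ≥ 0 := ent_nonneg (push_isP hqP _)
  obtain ⟨a, b, ha, hb, hsupp, hle⟩ := bsg h2 hqP (y1 := push q (fun w => w.1))
    (y2 := push q (fun w => w.1)) (push_isP hqP _) (push_isP hqP _) 44 (-23) (-22) 0 0
    (by norm_num) le_rfl le_rfl
  obtain ⟨H, z, hz, hfin⟩ := pfr_pair h2 ha hb S (fun g hg =>
    hpush (fun w => w.1) S (fun w hw => (hP _ hw).1) g (hsupp g hg))
  refine ⟨H, z, ?_⟩
  rw [hu, hu, hu, hqe] at hle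
  have b1 : HH q (fun w => w.1 + w.2.1) ≤ log #S' :=
    ent_le_log (push_isP hqP _) S' (hpush _ S' (fun w hw => (hP _ hw).2.2))
  have b2 : HH q (fun w => w.1) ≤ log #S :=
    ent_le_log (push_isP hqP _) S (hpush _ S (fun w hw => (hP _ hw).1))
  have b3 : HH q (fun w => w.2.1) ≤ log #S :=
    ent_le_log (push_isP hqP _) S (hpush _ S (fun w hw => (hP _ hw).2.1))
  obtain ⟨w, hw⟩ := hne
  have pS : (0 : ℝ) < #S := by exact_mod_cast Finset.card_pos.2 ⟨_, (hP w hw).1⟩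
  have pS' : (0 : ℝ) < #S' := by exact_mod_cast Finset.card_pos.2 ⟨_, (hP w hw).2.2⟩
  have pH : (0 : ℝ) < (#{h : G | h ∈ H} : ℕ) := by exact_mod_cast cardH_pos H
  have pz : (0 : ℝ) < (#{x ∈ S | x - z ∈ H} : ℕ) := by exact_mod_cast hz
  refine log_final hQp pH pz pS' pS ?_
  linarith

end pfr2
end part4

section part5
set_option linter.unusedSectionVars false
set_option linter.unusedVariables false

section weyl
open Matrix

noncomputable def sg (a : ZMod 2) : ℝ := (-1) ^ a.val

lemma sg_zero : sg 0 = 1 := by simp [sg]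
lemma sg_one : sg 1 = -1 := by simp [sg, ZMod.val_one]
lemma z2 (a : ZMod 2) : a = 0 ∨ a = 1 := by revert a; decide
lemma z2_add_self (a : ZMod 2) : a + a = 0 := by revert a; decide
lemma sg_add (a b : ZMod 2) : sg (a + b) = sg a * sg b := by
  rcases z2 a with rfl | rfl <;> rcases z2 b with rfl | rfl <;>
    simp [sg_zero, sg_one, z2_add_self]
lemma sg_ne {a : ZMod 2} (h : a ≠ 0) : sg a = -1 := by
  rcases z2 a with rfl | rfl
  · exact absurd rfl h
  · exact sg_one
lemma sg_sq (a : ZMod 2) : sg a * sg a = 1 := by rw [← sg_add, z2_add_self, sg_zero]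
lemma sg_le (a : ZMod 2) : sg a ≤ 1 := by
  rcases z2 a with rfl | rfl <;> simp [sg_zero, sg_one]
lemma neg_one_pow_sg (m : ℕ) : ((-1 : ℂ)) ^ m = ((sg (m : ZMod 2) : ℝ) : ℂ) := by
  induction m with
  | zero => simp [sg_zero]
  | succ k ih => rw [pow_succ, ih]; push_cast; rw [sg_add, sg_one]; push_cast; ring

variable {n : ℕ}

def dt (a b : Fin n → ZMod 2) : ZMod 2 := ∑ i, a i * b i

lemma dt_add_right (a b c : Fin n → ZMod 2) : dt a (b + c) = dt a b + dt a c := by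
  simp [dt, mul_add, Finset.sum_add_distrib]
lemma dt_add_left (a b c : Fin n → ZMod 2) : dt (a + b) c = dt a c + dt b c := by
  simp [dt, add_mul, Finset.sum_add_distrib]
lemma dt_comm (a b : Fin n → ZMod 2) : dt a b = dt b a := by
  simp [dt, mul_comm]

lemma cast_dt (a b : Fin n → ZMod 2) : ((∑ i, (a i).val * (b i).val : ℕ) : ZMod 2) = dt a b := by
  simp [dt]

lemma sympl_eq (x y : PhaseSpace n) : sympl x y = dt x.1 y.2 + dt x.2 y.1 := rfl

lemma sympl_add_left (x y z : PhaseSpace n) : sympl (x + y) z = sympl x z + sympl y z := by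
  simp only [sympl_eq, Prod.fst_add, Prod.snd_add, dt_add_left]; ring
lemma sympl_add_right (x y z : PhaseSpace n) : sympl x (y + z) = sympl x y + sympl x z := by
  simp only [sympl_eq, Prod.fst_add, Prod.snd_add, dt_add_right]; ring
lemma sympl_comm (x y : PhaseSpace n) : sympl x y = sympl y x := by
  simp only [sympl_eq]; rw [dt_comm x.1, dt_comm x.2]; ring
lemma sympl_self (x : PhaseSpace n) : sympl x x = 0 := by
  rw [sympl_eq, dt_comm x.2, z2_add_self]
lemma sympl_zero_left (x : PhaseSpace n) : sympl 0 x = 0 := by simp [sympl]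
lemma sympl_zero_right (x : PhaseSpace n) : sympl x 0 = 0 := by simp [sympl]

lemma ps_add_self (x : PhaseSpace n) : x + x = 0 := by
  ext i <;> simp [z2_add_self]

lemma sympl_nondeg {x : PhaseSpace n} (hx : x ≠ 0) : ∃ y, sympl x y ≠ 0 := by
  by_contra h
  push Not at h
  apply hx
  ext i
  · have := h (0, Pi.single i 1)
    simpa [sympl, Pi.single_apply] using this
  · have := h (Pi.single i 1, 0)
    simpa [sympl, Pi.single_apply] using this

noncomputable def ph (x : PhaseSpace n) : ℂ := Complex.I ^ (∑ i, (x.1 i).val * (x.2 i).val)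

lemma ph_ne (x : PhaseSpace n) : ph x ≠ 0 := pow_ne_zero _ Complex.I_ne_zero

lemma weyl_apply (x : PhaseSpace n) (k j) :
    Weyl x k j = ph x * (if k = j + x.1 then ((sg (dt x.2 j) : ℝ) : ℂ) else 0) := by
  unfold Weyl ph
  rw [neg_one_pow_sg, cast_dt]

lemma weyl_mul (x y : PhaseSpace n) :
    Weyl x * Weyl y = (ph x * ph y * (sg (dt x.2 y.1) : ℝ) / ph (x + y)) • Weyl (x + y) := by
  ext k j
  rw [Matrix.mul_apply, Matrix.smul_apply, smul_eq_mul]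
  rw [Finset.sum_eq_single (j + y.1)]
  · rw [weyl_apply, weyl_apply, weyl_apply]
    have := ph_ne (x + y)
    have e : (k = j + (x + y).1) ↔ (k = j + y.1 + x.1) := by
      rw [Prod.fst_add, add_assoc, add_comm y.1]
    simp only [e, if_true]
    split_ifs
    · rw [dt_add_right, Prod.snd_add, dt_add_left, sg_add, sg_add]
      push_cast
      field_simp
    · simp
  · intro l _ hl
    rw [weyl_apply y, if_neg hl]; simp
  · simp

lemma weyl_zero : Weyl (0 : PhaseSpace n) = 1 := by
  ext k j
  rw [weyl_apply, Matrix.one_apply]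
  simp [ph, dt, sg_zero]

lemma weyl_sq (x : PhaseSpace n) : Weyl x * Weyl x = 1 := by
  rw [weyl_mul, ps_add_self, weyl_zero]
  have : ph x * ph x * (sg (dt x.2 x.1) : ℝ) / ph (0 : PhaseSpace n) = 1 := by
    rw [dt_comm, ← cast_dt, ← neg_one_pow_sg]
    simp only [ph]
    rw [← mul_pow, Complex.I_mul_I, ← mul_pow]; simp
  rw [this, one_smul]

lemma weyl_herm (x : PhaseSpace n) : (Weyl x)ᴴ = Weyl x := by
  ext k j
  rw [conjTranspose_apply, weyl_apply, weyl_apply]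
  have e : (j = k + x.1) ↔ (k = j + x.1) := by
    have : x.1 + x.1 = 0 := by ext i; simp [z2_add_self]
    constructor <;> (rintro rfl; rw [add_assoc, this, add_zero])
  simp only [e]
  split_ifs with h
  · rw [h, dt_add_right, sg_add]
    have : star (ph x) * (sg (dt x.2 x.1) : ℝ) = ph x := by
      rw [dt_comm, ← cast_dt, ← neg_one_pow_sg]
      simp only [ph, star_pow, ← mul_pow]
      simp
    rw [star_mul', Complex.star_def, Complex.conj_ofReal, ← Complex.star_def]
    push_cast
    linear_combination ((sg (dt x.2 j) : ℝ) : ℂ) * this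
  · simp

lemma weyl_comm (x y : PhaseSpace n) : Weyl x * Weyl y = (sg (sympl x y) : ℂ) • (Weyl y * Weyl x) := by
  rw [weyl_mul, weyl_mul y x, add_comm y x, smul_smul, sympl_eq, sg_add, dt_comm x.1]
  congr 1
  have := sg_sq (dt y.2 x.1)
  have h : ((sg (dt y.2 x.1) : ℝ) : ℂ) * (sg (dt y.2 x.1) : ℝ) = 1 := by exact_mod_cast this
  push_cast
  linear_combination (-(ph x * ph y * (sg (dt x.2 y.1) : ℝ) / ph (x + y))) * h

noncomputable def kap (x y : PhaseSpace n) : ℂ := ph x * ph y * (sg (dt x.2 y.1) : ℝ) / ph (x + y)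

lemma weyl_mul' (x y : PhaseSpace n) : Weyl x * Weyl y = kap x y • Weyl (x + y) := weyl_mul x y

lemma kap_sq (x y : PhaseSpace n) : kap x y * kap x y = (sg (sympl x y) : ℝ) := by
  have h1 : (Weyl x * Weyl y) * (Weyl x * Weyl y) = (kap x y * kap x y) • (1 : Matrix _ _ ℂ) := by
    rw [weyl_mul', smul_mul_smul_comm, weyl_sq]
  have h2 : (Weyl x * Weyl y) * (Weyl x * Weyl y) = ((sg (sympl x y) : ℝ) : ℂ) • (1 : Matrix _ _ ℂ) := by
    nth_rw 1 [weyl_comm]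
    rw [smul_mul_assoc, Matrix.mul_assoc, ← Matrix.mul_assoc (Weyl x), weyl_sq, Matrix.one_mul, weyl_sq]
  have := congrFun (congrFun (h1.symm.trans h2) 0) 0
  simpa using this

lemma weyl_conj (x y : PhaseSpace n) : Weyl y * Weyl x * Weyl y = (sg (sympl x y) : ℂ) • Weyl x := by
  rw [Matrix.mul_assoc, weyl_comm, Matrix.mul_smul, ← Matrix.mul_assoc, weyl_sq, Matrix.one_mul]

lemma weyl_trace {x : PhaseSpace n} (hx : x ≠ 0) : (Weyl x).trace = 0 := by
  obtain ⟨y, hy⟩ := sympl_nondeg hx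
  have h := congrArg Matrix.trace (weyl_conj x y)
  rw [Matrix.trace_mul_cycle, weyl_sq, Matrix.one_mul, sg_ne hy, Matrix.trace_smul] at h
  simp only [smul_eq_mul] at h
  push_cast at h
  have h2 : (2 : ℂ) * (Weyl x).trace = 0 := by linear_combination h
  simpa using h2

end weyl
end part5

section part6
set_option linter.unusedSectionVars false
set_option linter.unusedVariables false

section quantum
open Matrix
open scoped Kronecker ComplexOrder
variable {n : ℕ}

noncomputable def ff (ρ : Matrix (Fin n → ZMod 2) (Fin n → ZMod 2) ℂ) (x : PhaseSpace n) : ℝ :=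
  (Weyl x * ρ).trace.re

lemma ff_trace {ρ : Matrix (Fin n → ZMod 2) (Fin n → ZMod 2) ℂ} (hρ : ρ.PosSemidef)
    (x : PhaseSpace n) : (Weyl x * ρ).trace = (ff ρ x : ℂ) := by
  have h : star ((Weyl x * ρ).trace) = (Weyl x * ρ).trace := by
    rw [← Matrix.trace_conjTranspose, Matrix.conjTranspose_mul, weyl_herm, hρ.1.eq,
      Matrix.trace_mul_comm]
  exact (Complex.conj_eq_iff_re.1 h).symm

lemma ff_zero {ρ : Matrix (Fin n → ZMod 2) (Fin n → ZMod 2) ℂ} (h1 : ρ.trace = 1) :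
    ff ρ 0 = 1 := by
  rw [ff, weyl_zero, Matrix.one_mul, h1]; rfl

lemma var_nonneg {m : Type} [Fintype m] [DecidableEq m] {σ M : Matrix m m ℂ} (hσ : σ.PosSemidef)
    (h1 : σ.trace = 1) (hM : Mᴴ = M) {t s : ℝ} (ht : (M * σ).trace = t)
    (hs : (M * M * σ).trace = s) : t ^ 2 ≤ s := by
  have h := (hσ.mul_mul_conjTranspose_same (M - (t : ℂ) • (1 : Matrix m m ℂ))).trace_nonneg
  have e : (M - (t : ℂ) • (1 : Matrix m m ℂ))ᴴ = M - (t : ℂ) • (1 : Matrix m m ℂ) := by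
    rw [conjTranspose_sub, hM, conjTranspose_smul, conjTranspose_one, Complex.star_def,
      Complex.conj_ofReal]
  have e2 : ((M - (t : ℂ) • (1 : Matrix m m ℂ)) * σ * (M - (t : ℂ) • (1 : Matrix m m ℂ))).trace
      = ((s - t ^ 2 : ℝ) : ℂ) := by
    rw [Matrix.trace_mul_cycle]
    have : (M - (t : ℂ) • (1 : Matrix m m ℂ)) * (M - (t : ℂ) • (1 : Matrix m m ℂ)) * σ
        = M * M * σ - (2 * t : ℂ) • (M * σ) + ((t : ℂ) * t) • σ := by
      simp only [sub_mul, mul_sub, smul_mul_assoc, mul_smul_comm, one_mul, mul_one, smul_sub,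
        smul_smul]
      module
    rw [this, trace_add, trace_sub, trace_smul, trace_smul, ht, hs, h1]
    simp only [smul_eq_mul]
    push_cast; ring
  rw [e, e2] at h
  have h' : (0 : ℝ) ≤ s - t ^ 2 := by exact_mod_cast h
  linarith

lemma Q1 {ρ : Matrix (Fin n → ZMod 2) (Fin n → ZMod 2) ℂ} (hρ : ρ.PosSemidef) (h1 : ρ.trace = 1)
    (T : Finset (PhaseSpace n)) :
    (∑ x ∈ T, ff ρ x ^ 2) ^ 2 ≤ ∑ x ∈ T, ∑ y ∈ T, sg (sympl x y) * ff ρ (x + y) ^ 2 := by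
  have tr : ∀ x, ((Weyl x ⊗ₖ Weyl x) * (ρ ⊗ₖ ρ)).trace = ((ff ρ x ^ 2 : ℝ) : ℂ) := fun x => by
    rw [← mul_kronecker_mul, trace_kronecker, ff_trace hρ]; push_cast; ring
  refine var_nonneg (σ := ρ ⊗ₖ ρ) (M := ∑ x ∈ T, (Weyl x ⊗ₖ Weyl x)) (hρ.kronecker hρ) ?_ ?_ ?_ ?_
  · rw [trace_kronecker, h1, one_mul]
  · rw [conjTranspose_sum]
    refine Finset.sum_congr rfl fun x _ => ?_
    rw [conjTranspose_kronecker, weyl_herm]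
  · rw [Finset.sum_mul, trace_sum]
    push_cast
    refine Finset.sum_congr rfl fun x _ => ?_
    rw [tr]; push_cast; rfl
  · rw [Finset.sum_mul, Finset.sum_mul, trace_sum]
    push_cast
    refine Finset.sum_congr rfl fun x _ => ?_
    rw [Finset.mul_sum, Finset.sum_mul, trace_sum]
    refine Finset.sum_congr rfl fun y _ => ?_
    rw [← mul_kronecker_mul, weyl_mul', smul_kronecker, kronecker_smul, smul_smul, kap_sq,
      smul_mul_assoc, trace_smul, tr]
    push_cast; rfl

open scoped Classical in
lemma char_sum {G : Type} [AddCommGroup G] [Fintype G] (H : AddSubgroup G) (χ : G → ZMod 2)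
    (hχ : ∀ a b, χ (a + b) = χ a + χ b) :
    ∑ g with g ∈ H, sg (χ g) =
      if ∀ g ∈ H, χ g = 0 then (((Finset.univ.filter (fun g => g ∈ H)).card : ℕ) : ℝ) else 0 := by
  split_ifs with h
  · rw [Finset.sum_congr rfl (g := fun _ => (1 : ℝ)), Finset.sum_const, nsmul_eq_mul, mul_one]
    intro g hg
    rw [h g (by simpa using hg), sg_zero]
  · push Not at h
    obtain ⟨g0, hg0, hne⟩ := h
    have e : ∑ g with g ∈ H, sg (χ g) = ∑ g with g ∈ H, sg (χ (g + g0)) := by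
      rw [Finset.sum_filter, Finset.sum_filter, ← Equiv.sum_comp (Equiv.addRight g0)]
      refine Finset.sum_congr rfl fun g _ => ?_
      simp [H.add_mem_cancel_right hg0]
    simp only [hχ, sg_add, sg_ne hne, ← Finset.sum_mul] at e
    linarith

lemma char_sum_univ (x : PhaseSpace n) :
    ∑ y, sg (sympl x y) = if x = 0 then (4 : ℝ) ^ n else 0 := by
  have h := char_sum (⊤ : AddSubgroup (PhaseSpace n)) (fun y => sympl x y) (sympl_add_right x)
  simp only [AddSubgroup.mem_top, Finset.filter_true, forall_true_left] at h
  rw [h]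
  by_cases hx : x = 0
  · subst hx
    simp only [sympl_zero_left, implies_true, if_true, Finset.card_univ]
    simp [Fintype.card_prod, ZMod.card]
    rw [← mul_pow]; norm_num
  · rw [if_neg hx, if_neg]
    push Not
    exact sympl_nondeg hx

/-- `∑ f² ≤ 2^n` -/
lemma Q2 {ρ : Matrix (Fin n → ZMod 2) (Fin n → ZMod 2) ℂ} (hρ : ρ.PosSemidef) (h1 : ρ.trace = 1) :
    ∑ x, ff ρ x ^ 2 ≤ 2 ^ n := by
  have h := Q1 hρ h1 Finset.univ
  have e : ∑ x, ∑ y, sg (sympl x y) * ff ρ (x + y) ^ 2 = 4 ^ n := by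
    have : ∀ x : PhaseSpace n, ∑ y, sg (sympl x y) * ff ρ (x + y) ^ 2 =
        ∑ k, sg (sympl x k) * ff ρ k ^ 2 := fun x => by
      rw [← Equiv.sum_comp (Equiv.addLeft x)]
      refine Finset.sum_congr rfl fun g _ => ?_
      simp only [Equiv.coe_addLeft, sympl_add_right, sympl_self, zero_add]
      rw [← add_assoc, ps_add_self, zero_add]
    simp only [this]
    rw [Finset.sum_comm]
    simp only [← Finset.sum_mul]
    have e2 : ∀ k : PhaseSpace n, ∑ x, sg (sympl x k) = if k = 0 then (4 : ℝ) ^ n else 0 := fun k => by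
      rw [← char_sum_univ]; exact Finset.sum_congr rfl fun x _ => by rw [sympl_comm]
    simp only [e2]
    simp [ff_zero h1]
  rw [e, show (4 : ℝ) ^ n = (2 ^ n) ^ 2 by rw [← pow_mul, mul_comm, pow_mul]; norm_num] at h
  exact abs_le_of_sq_le_sq' h (by positivity) |>.2

open scoped Classical in
lemma coset_bound {ρ : Matrix (Fin n → ZMod 2) (Fin n → ZMod 2) ℂ} (hρ : ρ.PosSemidef)
    (h1 : ρ.trace = 1) (H : AddSubgroup (PhaseSpace n)) (z : PhaseSpace n) :
    (∑ x with x - z ∈ H, ff ρ x ^ 2) ^ 2 ≤ (((Finset.univ.filter (fun g => g ∈ H)).card : ℕ) : ℝ) *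
      ∑ k with k ∈ H ∧ ∀ g ∈ H, sympl g k = 0, ff ρ k ^ 2 := by
  refine (Q1 hρ h1 _).trans ?_
  have shift : ∀ F : PhaseSpace n → ℝ, ∑ x with x - z ∈ H, F x = ∑ g with g ∈ H, F (z + g) :=
    fun F => by
      rw [Finset.sum_filter, Finset.sum_filter, ← Equiv.sum_comp (Equiv.addLeft z)]
      simp
  simp only [shift]
  have inner : ∀ g ∈ H, ∑ h with h ∈ H, sg (sympl (z + g) (z + h)) * ff ρ (z + g + (z + h)) ^ 2 =
      ∑ k with k ∈ H, sg (sympl z k) * ff ρ k ^ 2 * sg (sympl g k) := fun g hg => by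
    rw [Finset.sum_filter, Finset.sum_filter, ← Equiv.sum_comp (Equiv.addLeft g)]
    refine Finset.sum_congr rfl fun k _ => ?_
    simp only [Equiv.coe_addLeft, H.add_mem_cancel_left hg]
    split_ifs
    · rw [show z + g + (z + (g + k)) = (z + z) + (g + g) + k by abel, ps_add_self, ps_add_self,
        zero_add, zero_add]
      have : sympl (z + g) (z + (g + k)) = sympl z k + sympl g k := by
        simp only [sympl_add_left, sympl_add_right, sympl_self, sympl_comm g z]
        have := z2_add_self (sympl z g)
        linear_combination this
      rw [this, sg_add]; ring
    · rfl
  rw [Finset.sum_congr rfl (fun g hg => inner g (by simpa using hg)), Finset.sum_comm]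
  simp only [← Finset.mul_sum]
  have e : ∀ k : PhaseSpace n, ∑ g with g ∈ H, sg (sympl g k) = if ∀ g ∈ H, sympl g k = 0 then
      (((Finset.univ.filter (fun g => g ∈ H)).card : ℕ) : ℝ) else 0 := fun k =>
    char_sum H (fun g => sympl g k) (fun a b => sympl_add_left a b k)
  simp only [e]
  rw [Finset.mul_sum, Finset.sum_filter, Finset.sum_filter]
  refine Finset.sum_le_sum fun k _ => ?_
  by_cases hk : k ∈ H
  · by_cases hk2 : ∀ g ∈ H, sympl g k = 0
    · rw [if_pos hk, if_pos hk2, if_pos ⟨hk, hk2⟩, mul_comm]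
      refine mul_le_mul_of_nonneg_left ?_ (Nat.cast_nonneg _)
      have := sg_le (sympl z k)
      nlinarith [sq_nonneg (ff ρ k)]
    · rw [if_pos hk, if_neg hk2, if_neg (fun h => hk2 h.2)]; simp
  · rw [if_neg hk, if_neg (fun h => hk h.1)]

lemma exists_lagr (R : AddSubgroup (PhaseSpace n)) (hR : ∀ x ∈ R, ∀ y ∈ R, sympl x y = 0) :
    ∃ L : AddSubgroup (PhaseSpace n), R ≤ L ∧ ∀ x, x ∈ L ↔ ∀ y ∈ L, sympl x y = 0 := by
  obtain ⟨L, hRL, hL⟩ := Finite.exists_le_maximal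
    (p := fun K : AddSubgroup (PhaseSpace n) => ∀ x ∈ K, ∀ y ∈ K, sympl x y = 0) hR
  refine ⟨L, hRL, fun x => ⟨fun hx y hy => hL.1 x hx y hy, fun hx => ?_⟩⟩
  let K : AddSubgroup (PhaseSpace n) :=
    { carrier := {y | y ∈ L ∨ y + x ∈ L}
      zero_mem' := Or.inl L.zero_mem
      add_mem' := by
        rintro a b (ha | ha) (hb | hb)
        · exact Or.inl (L.add_mem ha hb)
        · refine Or.inr ?_; rw [add_assoc]; exact L.add_mem ha hb
        · refine Or.inr ?_
          rw [show a + b + x = a + x + b by abel]; exact L.add_mem ha hb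
        · refine Or.inl ?_
          have := L.add_mem ha hb
          rwa [show a + x + (b + x) = a + b + (x + x) by abel, ps_add_self, add_zero] at this
      neg_mem' := by
        intro a ha
        rwa [show -a = a from neg_eq_of_add_eq_zero_left (ps_add_self a)] }
  have hK : ∀ a ∈ K, ∀ b ∈ K, sympl a b = 0 := by
    have hx' : ∀ y ∈ L, sympl y x = 0 := fun y hy => by rw [sympl_comm]; exact hx y hy
    have key : ∀ a ∈ K, ∃ l ∈ L, a = l ∨ a = l + x := by
      rintro a (ha | ha)
      · exact ⟨a, ha, Or.inl rfl⟩
      · exact ⟨a + x, ha, Or.inr (by rw [add_assoc, ps_add_self, add_zero])⟩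
    intro a ha b hb
    obtain ⟨l, hl, h1⟩ := key a ha
    obtain ⟨l', hl', h2⟩ := key b hb
    have h0 := hL.1 l hl l' hl'
    rcases h1 with rfl | rfl <;> rcases h2 with rfl | rfl <;>
      simp [sympl_add_left, sympl_add_right, sympl_self, h0, hx', hx, hl, hl']
  have hLK : L ≤ K := fun y hy => Or.inl hy
  exact hL.2 hK hLK (Or.inr (by rw [ps_add_self]; exact L.zero_mem))

open scoped Classical in
lemma card_lagr (L : AddSubgroup (PhaseSpace n)) (hL : ∀ x, x ∈ L ↔ ∀ y ∈ L, sympl x y = 0) :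
    (((Finset.univ.filter (fun g => g ∈ L)).card : ℕ) : ℝ) = 2 ^ n := by
  set c := (((Finset.univ.filter (fun g => g ∈ L)).card : ℕ) : ℝ) with hc
  have a : ∑ y, ∑ x with x ∈ L, sg (sympl x y) = c * c := by
    have e : ∀ k : PhaseSpace n, ∑ g with g ∈ L, sg (sympl g k) = if k ∈ L then c else 0 := fun k => by
      rw [char_sum L (fun g => sympl g k) (fun a b => sympl_add_left a b k)]
      have : (∀ g ∈ L, sympl g k = 0) ↔ k ∈ L := by
        rw [hL k]; exact forall₂_congr fun g _ => by rw [sympl_comm]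
      exact if_congr this rfl rfl
    simp only [e]
    rw [← Finset.sum_filter, Finset.sum_const, nsmul_eq_mul]
  rw [Finset.sum_comm] at a
  simp only [char_sum_univ] at a
  rw [Finset.sum_filter, Finset.sum_eq_single 0] at a
  · rw [if_pos L.zero_mem, if_pos rfl,
      show (4 : ℝ) ^ n = (2 ^ n) ^ 2 by rw [← pow_mul, mul_comm, pow_mul]; norm_num, ← sq] at a
    exact ((sq_eq_sq₀ (by positivity) (Nat.cast_nonneg _)).1 a).symm
  · intro b _ hb; simp [hb]
  · simp

end quantum
end part6

section part7
set_option linter.unusedSectionVars false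
set_option linter.unusedVariables false

section stab
open Matrix
open scoped ComplexOrder
variable {n : ℕ}

lemma eig_exists (L : AddSubgroup (PhaseSpace n)) (hL : ∀ x ∈ L, ∀ y ∈ L, sympl x y = 0)
    (T : Finset (PhaseSpace n)) : (∀ x ∈ T, x ∈ L) → ∃ v : (Fin n → ZMod 2) → ℂ, v ≠ 0 ∧
      ∀ x ∈ T, ∃ s : ℝ, (s = 1 ∨ s = -1) ∧ Weyl x *ᵥ v = (s : ℂ) • v := by
  classical
  induction T using Finset.induction_on with
  | empty => exact fun _ => ⟨fun _ => 1, fun h => by simpa using congrFun h 0, by simp⟩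
  | insert x T hx ih =>
    intro hT
    obtain ⟨v, hv, hs⟩ := ih (fun y hy => hT y (Finset.mem_insert_of_mem hy))
    by_cases h : Weyl x *ᵥ v = -v
    · refine ⟨v, hv, fun y hy => ?_⟩
      rcases Finset.mem_insert.1 hy with rfl | hy
      · exact ⟨-1, Or.inr rfl, by rw [h]; simp⟩
      · exact hs y hy
    · refine ⟨v + Weyl x *ᵥ v, fun h0 => h (eq_neg_of_add_eq_zero_right h0), fun y hy => ?_⟩
      rcases Finset.mem_insert.1 hy with rfl | hy
      · refine ⟨1, Or.inl rfl, ?_⟩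
        rw [mulVec_add, mulVec_mulVec, weyl_sq, one_mulVec, add_comm]; simp
      · obtain ⟨s, h1, h2⟩ := hs y hy
        refine ⟨s, h1, ?_⟩
        rw [mulVec_add, mulVec_mulVec, weyl_comm, hL y (hT y (Finset.mem_insert_of_mem hy)) x
          (hT x (Finset.mem_insert_self _ _)), sg_zero]
        simp only [Complex.ofReal_one, one_smul]
        rw [← mulVec_mulVec, h2, mulVec_smul, smul_add]

lemma eig_unit (L : AddSubgroup (PhaseSpace n)) (hL : ∀ x ∈ L, ∀ y ∈ L, sympl x y = 0) :
    ∃ (φ : (Fin n → ZMod 2) → ℂ) (s : PhaseSpace n → ℝ), (∑ j, Complex.normSq (φ j)) = 1 ∧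
      ∀ x ∈ L, (s x = 1 ∨ s x = -1) ∧ Weyl x *ᵥ φ = (s x : ℂ) • φ := by
  classical
  obtain ⟨v, hv, hs⟩ := eig_exists L hL (Finset.univ.filter (fun x => x ∈ L)) (by simp)
  have hpos : 0 < ∑ j, Complex.normSq (v j) := by
    obtain ⟨j, hj⟩ := Function.ne_iff.1 hv
    exact Finset.sum_pos' (fun i _ => Complex.normSq_nonneg _)
      ⟨j, Finset.mem_univ _, Complex.normSq_pos.2 hj⟩
  set N := ∑ j, Complex.normSq (v j) with hN
  have hs' : ∀ x, ∃ s : ℝ, x ∈ L → (s = 1 ∨ s = -1) ∧ Weyl x *ᵥ v = (s : ℂ) • v := fun x => by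
    by_cases hx : x ∈ L
    · obtain ⟨s, h⟩ := hs x (by simpa using hx)
      exact ⟨s, fun _ => h⟩
    · exact ⟨0, fun h => absurd h hx⟩
  choose s hs2 using hs'
  refine ⟨((Real.sqrt N)⁻¹ : ℂ) • v, s, ?_, fun x hx => ⟨(hs2 x hx).1, ?_⟩⟩
  · simp only [Pi.smul_apply, smul_eq_mul, Complex.normSq_mul, ← Finset.mul_sum, ← hN]
    rw [← Complex.ofReal_inv, Complex.normSq_ofReal, ← mul_inv, Real.mul_self_sqrt hpos.le,
      inv_mul_cancel₀ hpos.ne']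
  · rw [mulVec_smul, (hs2 x hx).2, smul_comm]

lemma outer_trace {φ : (Fin n → ZMod 2) → ℂ} (h : (∑ j, Complex.normSq (φ j)) = 1) :
    (outer φ).trace = 1 := by
  rw [outer, trace_vecMulVec, dotProduct]
  simp only [Complex.mul_conj]
  exact_mod_cast h

lemma outer_herm (φ : (Fin n → ZMod 2) → ℂ) : (outer φ)ᴴ = outer φ := by
  ext i j
  simp [outer, vecMulVec_apply, mul_comm]

lemma outer_sq {φ : (Fin n → ZMod 2) → ℂ} (h : (∑ j, Complex.normSq (φ j)) = 1) :
    outer φ * outer φ = outer φ := by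
  ext i j
  rw [mul_apply]
  simp only [outer, vecMulVec_apply]
  have : ∑ k, φ k * (starRingEnd ℂ) (φ k) = 1 := by
    simp only [Complex.mul_conj]; exact_mod_cast h
  calc _ = ∑ k, (φ i * (starRingEnd ℂ) (φ j)) * (φ k * (starRingEnd ℂ) (φ k)) :=
        Finset.sum_congr rfl fun k _ => by ring
    _ = _ := by rw [← Finset.mul_sum, this, mul_one]

lemma weyl_outer {φ : (Fin n → ZMod 2) → ℂ} {x : PhaseSpace n} {s : ℝ}
    (h : Weyl x *ᵥ φ = (s : ℂ) • φ) : Weyl x * outer φ = (s : ℂ) • outer φ := by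
  rw [outer, mul_vecMulVec, h]
  ext i j
  simp [vecMulVec_apply, mul_assoc]

lemma outer_weyl {φ : (Fin n → ZMod 2) → ℂ} {x : PhaseSpace n} {s : ℝ}
    (h : Weyl x *ᵥ φ = (s : ℂ) • φ) : outer φ * Weyl x = (s : ℂ) • outer φ := by
  have := congrArg conjTranspose (weyl_outer h)
  rw [conjTranspose_mul, weyl_herm, outer_herm, conjTranspose_smul, outer_herm, Complex.star_def,
    Complex.conj_ofReal] at this
  exact this

lemma pm_sq {s : ℝ} (h : s = 1 ∨ s = -1) : (s : ℂ) * s = 1 := by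
  rcases h with rfl | rfl <;> simp

lemma stab_state {L : AddSubgroup (PhaseSpace n)} (hL : ∀ x, x ∈ L ↔ ∀ y ∈ L, sympl x y = 0)
    {φ : (Fin n → ZMod 2) → ℂ} {s : PhaseSpace n → ℝ} (h : (∑ j, Complex.normSq (φ j)) = 1)
    (hs : ∀ x ∈ L, (s x = 1 ∨ s x = -1) ∧ Weyl x *ᵥ φ = (s x : ℂ) • φ) :
    IsStabilizerState φ := by
  refine ⟨h, ?_⟩
  have e : weylSet (outer φ) = (L : Set (PhaseSpace n)) := by
    ext x
    simp only [weylSet, Set.mem_ofPred_eq, SetLike.mem_coe]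
    constructor
    · intro hx
      by_contra hxL
      rw [hL] at hxL
      push Not at hxL
      obtain ⟨g, hg, hne⟩ := hxL
      have h0 : (Weyl x * outer φ).trace = -(Weyl x * outer φ).trace := by
        have h2 : Weyl g * outer φ * Weyl g = outer φ := by
          rw [weyl_outer (hs g hg).2, smul_mul_assoc, outer_weyl (hs g hg).2, smul_smul,
            pm_sq (hs g hg).1, one_smul]
        nth_rw 1 [← h2]
        rw [← Matrix.mul_assoc, Matrix.trace_mul_comm, ← Matrix.mul_assoc, ← Matrix.mul_assoc,
          weyl_conj, sg_ne hne, smul_mul_assoc, trace_smul]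
        simp
      have h0' : (Weyl x * outer φ).trace = 0 := by
        have : 2 * (Weyl x * outer φ).trace = 0 := by linear_combination h0
        simpa using this
      rw [h0'] at hx
      norm_num at hx
    · intro hx
      rw [weyl_outer (hs x hx).2, trace_smul, outer_trace h]
      rcases (hs x hx).1 with h | h <;> rw [h] <;> simp
  rw [e, IsLagrangian]
  ext x
  exact hL x

open scoped Classical in
lemma stab_outer {L : AddSubgroup (PhaseSpace n)} (hL : ∀ x, x ∈ L ↔ ∀ y ∈ L, sympl x y = 0)
    {φ : (Fin n → ZMod 2) → ℂ} {s : PhaseSpace n → ℝ} (h : (∑ j, Complex.normSq (φ j)) = 1)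
    (hs : ∀ x ∈ L, (s x = 1 ∨ s x = -1) ∧ Weyl x *ᵥ φ = (s x : ℂ) • φ) :
    outer φ = ((2 : ℂ) ^ n)⁻¹ • ∑ x with x ∈ L, (s x : ℂ) • Weyl x := by
  have hcard := card_lagr L hL
  have hcardC : (((Finset.univ.filter (fun g => g ∈ L)).card : ℕ) : ℂ) = 2 ^ n := by
    exact_mod_cast congrArg (fun r : ℝ => (r : ℂ)) hcard
  have hN : ((2 : ℂ) ^ n) ≠ 0 := by positivity
  have hφ : φ ≠ 0 := by rintro rfl; simp at h
  obtain ⟨j0, hj0⟩ := Function.ne_iff.1 hφ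
  have s0 : s 0 = 1 := by
    have h0 := congrFun (hs 0 L.zero_mem).2 j0
    rw [weyl_zero, one_mulVec] at h0
    simp only [Pi.smul_apply, smul_eq_mul] at h0
    have : (s 0 : ℂ) = 1 := by
      have := mul_right_cancel₀ hj0 ((one_mul (φ j0)).trans h0); exact this.symm
    exact_mod_cast this
  have smul : ∀ x ∈ L, ∀ y ∈ L, ((s x : ℂ) * s y) • (Weyl x * Weyl y) = (s (x + y) : ℂ) • Weyl (x + y) := by
    intro x hx y hy
    have a : (Weyl x * Weyl y) *ᵥ φ = ((s x : ℂ) * s y) • φ := by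
      rw [← mulVec_mulVec, (hs y hy).2, mulVec_smul, (hs x hx).2, smul_smul, mul_comm]
    rw [weyl_mul', smul_mulVec, (hs _ (L.add_mem hx hy)).2, smul_smul] at a
    have b := congrFun a j0
    simp only [Pi.smul_apply, smul_eq_mul] at b
    have c := mul_right_cancel₀ hj0 b
    rw [weyl_mul', smul_smul, ← c, mul_assoc, mul_comm (s (x + y) : ℂ), ← mul_assoc]
    rw [kap_sq, (hL x).1 hx y hy, sg_zero]; simp
  set Pj := ((2 : ℂ) ^ n)⁻¹ • ∑ x with x ∈ L, (s x : ℂ) • Weyl x with hPj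
  have hPjh : Pjᴴ = Pj := by
    rw [hPj, conjTranspose_smul, conjTranspose_sum]
    congr 1
    · simp
    · refine Finset.sum_congr rfl fun x _ => ?_
      rw [conjTranspose_smul, weyl_herm, Complex.star_def, Complex.conj_ofReal]
  have hPjo : Pj * outer φ = outer φ := by
    rw [hPj, smul_mul_assoc, Finset.sum_mul, Finset.sum_congr rfl (g := fun _ => outer φ)]
    · rw [Finset.sum_const, ← Nat.cast_smul_eq_nsmul ℂ, hcardC, smul_smul, inv_mul_cancel₀ hN, one_smul]
    · intro x hx
      have hx' : x ∈ L := by simpa using hx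
      rw [smul_mul_assoc, weyl_outer (hs x hx').2, smul_smul, pm_sq (hs x hx').1, one_smul]
  have hoPj : outer φ * Pj = outer φ := by
    have := congrArg conjTranspose hPjo
    rwa [conjTranspose_mul, hPjh, outer_herm] at this
  have hPjPj : Pj * Pj = Pj := by
    have key : ∀ x ∈ L, ((s x : ℂ) • Weyl x) * (∑ y with y ∈ L, (s y : ℂ) • Weyl y) =
        ∑ y with y ∈ L, (s y : ℂ) • Weyl y := by
      intro x hx
      rw [Finset.mul_sum]
      have : ∑ y with y ∈ L, (s y : ℂ) • Weyl y = ∑ y with y ∈ L, (s (x + y) : ℂ) • Weyl (x + y) := by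
        rw [Finset.sum_filter, Finset.sum_filter, ← Equiv.sum_comp (Equiv.addLeft x)]
        refine Finset.sum_congr rfl fun g _ => ?_
        simp [L.add_mem_cancel_left hx]
      rw [this]
      refine Finset.sum_congr rfl fun y hy => ?_
      rw [smul_mul_smul_comm, smul x hx y (by simpa using hy)]
    rw [hPj, smul_mul_smul_comm, Finset.sum_mul,
      Finset.sum_congr rfl (fun x hx => key x (by simpa using hx)),
      Finset.sum_const, ← Nat.cast_smul_eq_nsmul ℂ, hcardC, smul_smul]
    congr 1
    field_simp
  have hPjt : Pj.trace = 1 := by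
    rw [hPj, trace_smul, trace_sum, Finset.sum_filter, Finset.sum_eq_single 0]
    · rw [if_pos L.zero_mem, s0, weyl_zero, trace_smul, trace_one]
      simp [ZMod.card]
    · intro b _ hb
      split_ifs
      · rw [trace_smul, weyl_trace hb, smul_zero]
      · rfl
    · simp
  have hB : ((Pj - outer φ)ᴴ * (Pj - outer φ)).trace = 0 := by
    rw [conjTranspose_sub, hPjh, outer_herm, sub_mul, mul_sub, mul_sub, hPjPj, hPjo, hoPj, outer_sq h]
    simp [trace_sub, hPjt, outer_trace h]
  rw [trace_conjTranspose_mul_self_eq_zero_iff] at hB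
  exact (sub_eq_zero.1 hB).symm

lemma fid_bdd (ρ : Matrix (Fin n → ZMod 2) (Fin n → ZMod 2) ℂ) :
    BddAbove (Set.range fun φ : {φ : (Fin n → ZMod 2) → ℂ // IsStabilizerState φ} =>
      ((ρ * outer φ.1).trace).re) := by
  refine ⟨∑ i, ∑ j, ‖ρ i j‖, ?_⟩
  rintro _ ⟨⟨φ, hφ, -⟩, rfl⟩
  have hle : ∀ j, ‖φ j‖ ≤ 1 := fun j => by
    have := Finset.single_le_sum (f := fun j => Complex.normSq (φ j))
      (fun i _ => Complex.normSq_nonneg _) (Finset.mem_univ j)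
    rw [hφ] at this
    simp only [Complex.normSq_eq_norm_sq] at this
    exact abs_le_of_sq_le_sq' (by rwa [one_pow]) zero_le_one |>.2
  refine (Complex.re_le_norm _).trans ?_
  rw [trace]
  refine (norm_sum_le _ _).trans (Finset.sum_le_sum fun i _ => ?_)
  rw [diag_apply, mul_apply]
  refine (norm_sum_le _ _).trans (Finset.sum_le_sum fun j _ => ?_)
  rw [outer, vecMulVec_apply, norm_mul, norm_mul, RCLike.norm_conj]
  have : ‖φ j‖ * ‖φ i‖ ≤ 1 := mul_le_one₀ (hle j) (norm_nonneg _) (hle i)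
  exact mul_le_of_le_one_right (norm_nonneg _) this

open scoped Classical in
lemma fid_lagr {ρ : Matrix (Fin n → ZMod 2) (Fin n → ZMod 2) ℂ} (hρ : ρ.PosSemidef)
    (h1 : ρ.trace = 1) {L : AddSubgroup (PhaseSpace n)}
    (hL : ∀ x, x ∈ L ↔ ∀ y ∈ L, sympl x y = 0) :
    ∑ x with x ∈ L, ff ρ x ^ 2 ≤ 2 ^ n * stabFidelity ρ := by
  obtain ⟨φ, s, hφ, hs⟩ := eig_unit L (fun x hx y hy => (hL x).1 hx y hy)
  set F := stabFidelity ρ with hF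
  set q : PhaseSpace n → ℝ := fun y => (2 ^ n)⁻¹ * ∑ x with x ∈ L, sg (sympl x y) * (s x * ff ρ x) with hq
  have hqy : ∀ y, 0 ≤ q y ∧ q y ≤ F := by
    intro y
    set ψ := Weyl y *ᵥ φ with hψ
    have hψs : ∀ x ∈ L, ((sg (sympl x y) * s x) = 1 ∨ (sg (sympl x y) * s x) = -1) ∧
        Weyl x *ᵥ ψ = ((sg (sympl x y) * s x : ℝ) : ℂ) • ψ := by
      intro x hx
      constructor
      · rcases z2 (sympl x y) with h | h <;> rw [h] <;> rcases (hs x hx).1 with h | h <;> rw [h] <;>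
          simp [sg_zero, sg_one]
      · rw [hψ, mulVec_mulVec, weyl_comm, smul_mulVec, ← mulVec_mulVec, (hs x hx).2, mulVec_smul,
          smul_smul]
        push_cast; rfl
    have hψn : (∑ j, Complex.normSq (ψ j)) = 1 := by
      have e : ∀ v : (Fin n → ZMod 2) → ℂ, ((∑ j, Complex.normSq (v j) : ℝ) : ℂ) = star v ⬝ᵥ v := by
        intro v
        rw [dotProduct]; push_cast
        refine Finset.sum_congr rfl fun j _ => ?_
        rw [Complex.normSq_eq_conj_mul_self]; rfl
      have : ((∑ j, Complex.normSq (ψ j) : ℝ) : ℂ) = ((∑ j, Complex.normSq (φ j) : ℝ) : ℂ) := by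
        rw [e, e, hψ, star_mulVec, weyl_herm, dotProduct_mulVec, vecMul_vecMul, weyl_sq, vecMul_one]
      rw [hφ] at this
      exact_mod_cast this
    have ho := stab_outer hL hψn hψs
    have htr : (ρ * outer ψ).trace = (q y : ℂ) := by
      rw [ho, mul_smul_comm, trace_smul, Finset.mul_sum, trace_sum, hq]
      push_cast
      rw [smul_eq_mul]
      congr 1
      refine Finset.sum_congr rfl fun x _ => ?_
      rw [mul_smul_comm, trace_smul, trace_mul_comm, ff_trace hρ, smul_eq_mul]
      ring
    constructor
    · have h := (hρ.mul_mul_conjTranspose_same (outer ψ)).trace_nonneg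
      rw [outer_herm, trace_mul_cycle, outer_sq hψn, trace_mul_comm, htr] at h
      exact_mod_cast h
    · have := le_ciSup (fid_bdd ρ) ⟨ψ, stab_state hL hψn hψs⟩
      rw [htr] at this
      exact this
  have s0 : s 0 = 1 := by
    have hφ0 : φ ≠ 0 := by rintro rfl; simp at hφ
    obtain ⟨j0, hj0⟩ := Function.ne_iff.1 hφ0
    have h0 := congrFun (hs 0 L.zero_mem).2 j0
    rw [weyl_zero, one_mulVec] at h0
    simp only [Pi.smul_apply, smul_eq_mul] at h0
    have : (1 : ℂ) = s 0 := mul_right_cancel₀ hj0 ((one_mul (φ j0)).trans h0)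
    exact_mod_cast this.symm
  have hsum : ∑ y, q y = (2 ^ n)⁻¹ * 4 ^ n := by
    simp only [hq, ← Finset.mul_sum]
    rw [Finset.sum_comm]
    simp only [← Finset.sum_mul, char_sum_univ]
    rw [Finset.sum_filter, Finset.sum_eq_single 0]
    · simp [L.zero_mem, s0, ff_zero h1]
    · intro b _ hb; simp [hb]
    · simp
  have hsq : ∑ y, q y ^ 2 = ((2 ^ n)⁻¹) ^ 2 * (4 ^ n * ∑ x with x ∈ L, ff ρ x ^ 2) := by
    simp only [hq, mul_pow, ← Finset.mul_sum]
    congr 1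
    simp only [sq, Finset.sum_mul_sum]
    rw [Finset.sum_comm, Finset.mul_sum]
    refine Finset.sum_congr rfl fun x hx => ?_
    have hx' : x ∈ L := by simpa using hx
    rw [Finset.sum_comm]
    have : ∀ x', ∑ y, sg (sympl x y) * (s x * ff ρ x) * (sg (sympl x' y) * (s x' * ff ρ x')) =
        (if x + x' = 0 then (4 : ℝ) ^ n else 0) * (s x * ff ρ x * (s x' * ff ρ x')) := fun x' => by
      rw [← char_sum_univ, Finset.sum_mul]
      refine Finset.sum_congr rfl fun y _ => ?_
      rw [sympl_add_left, sg_add]; ring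
    simp only [this]
    rw [Finset.sum_eq_single x]
    · rw [if_pos (ps_add_self x)]
      have : s x * s x = 1 := by rcases (hs x hx').1 with h | h <;> rw [h] <;> norm_num
      linear_combination (4 : ℝ) ^ n * ff ρ x ^ 2 * this
    · intro b _ hb
      rw [if_neg, zero_mul]
      intro h0
      apply hb
      have := congrArg (fun t => x + t) h0
      simp only [← add_assoc, ps_add_self, zero_add, add_zero] at this
      exact this
    · intro h; exact absurd hx h
  have hle : ∑ y, q y ^ 2 ≤ F * ∑ y, q y := by
    rw [Finset.mul_sum]
    refine Finset.sum_le_sum fun y _ => ?_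
    rw [sq]; exact mul_le_mul_of_nonneg_right (hqy y).2 (hqy y).1
  rw [hsum, hsq, show (4 : ℝ) ^ n = 2 ^ n * 2 ^ n by rw [← mul_pow]; norm_num] at hle
  have hp : (0 : ℝ) < 2 ^ n := by positivity
  have e1 : ((2 ^ n)⁻¹ : ℝ) ^ 2 * (2 ^ n * 2 ^ n * ∑ x with x ∈ L, ff ρ x ^ 2) = ∑ x with x ∈ L, ff ρ x ^ 2 := by
    field_simp
  rw [e1, inv_mul_cancel_left₀ hp.ne'] at hle
  linarith

open scoped Classical in
lemma fid_coset {ρ : Matrix (Fin n → ZMod 2) (Fin n → ZMod 2) ℂ} (hρ : ρ.PosSemidef)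
    (h1 : ρ.trace = 1) (H : AddSubgroup (PhaseSpace n)) (z : PhaseSpace n) :
    (∑ x with x - z ∈ H, ff ρ x ^ 2) ^ 2 ≤ (((Finset.univ.filter (fun g => g ∈ H)).card : ℕ) : ℝ) *
      (2 ^ n * stabFidelity ρ) := by
  let R : AddSubgroup (PhaseSpace n) :=
    { carrier := {k | k ∈ H ∧ ∀ g ∈ H, sympl g k = 0}
      zero_mem' := ⟨H.zero_mem, fun g _ => sympl_zero_right g⟩
      add_mem' := fun {a b} ha hb => ⟨H.add_mem ha.1 hb.1, fun g hg => by
        rw [sympl_add_right, ha.2 g hg, hb.2 g hg, add_zero]⟩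
      neg_mem' := fun {a} ha => by
        rwa [show -a = a from neg_eq_of_add_eq_zero_left (ps_add_self a)] }
  obtain ⟨L, hRL, hL⟩ := exists_lagr R (fun x hx y hy => hy.2 x hx.1)
  have a := coset_bound hρ h1 H z
  have b := fid_lagr hρ h1 hL
  have c : ∑ k with k ∈ H ∧ ∀ g ∈ H, sympl g k = 0, ff ρ k ^ 2 ≤ ∑ x with x ∈ L, ff ρ x ^ 2 := by
    refine Finset.sum_le_sum_of_subset_of_nonneg ?_ (fun _ _ _ => sq_nonneg _)
    intro k hk
    simp only [Finset.mem_filter, Finset.mem_univ, true_and] at hk ⊢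
    exact hRL hk
  have d := a.trans (mul_le_mul_of_nonneg_left (c.trans b) (Nat.cast_nonneg _))
  exact d

end stab
end part7

section part8
set_option linter.unusedSectionVars false
set_option linter.unusedVariables false

section final
open Matrix
open scoped ComplexOrder
variable {n : ℕ}

lemma final_real {Q K m s' s N F γ : ℝ} (hK : 0 < K) (hm : 0 ≤ m) (hs' : 0 ≤ s')
    (hN : 0 < N) (hγ : 0 < γ)
    (h1 : Q ^ 133 * K ≤ m ^ 2 * s' ^ 89 * s ^ 176)
    (h2 : (γ / 2 * m) ^ 2 ≤ K * (N * F)) (h3 : γ ^ 2 / 8 * s ^ 2 ≤ Q)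
    (h4 : γ ^ 2 / 8 * s' ≤ N) (h5 : γ / 2 * N ≤ s) :
    (γ ^ 2 / 8) ^ 222 * (γ / 2) ^ 92 ≤ F := by
  set g := γ ^ 2 / 8 with hg
  set d := γ / 2 with hd
  have gp : 0 < g := by positivity
  have dp : 0 < d := by positivity
  clear_value g d
  have sp : 0 < s := lt_of_lt_of_le (by positivity) h5
  have a1 : (g * s ^ 2) ^ 133 * K ≤ m ^ 2 * s' ^ 89 * s ^ 176 :=
    (mul_le_mul_of_nonneg_right (pow_le_pow_left₀ (by positivity) h3 133) hK.le).trans h1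
  have a2 : (g * s') ^ 89 ≤ N ^ 89 := pow_le_pow_left₀ (by positivity) h4 89
  have a3 : (d * N) ^ 90 ≤ s ^ 90 := pow_le_pow_left₀ (by positivity) h5 90
  -- multiply a1 by d^2 * g^89
  have b1 : g ^ 222 * d ^ 2 * s ^ 266 * K ≤ (d * m) ^ 2 * (g * s') ^ 89 * s ^ 176 := by
    have := mul_le_mul_of_nonneg_left a1 (show 0 ≤ d ^ 2 * g ^ 89 by positivity)
    calc g ^ 222 * d ^ 2 * s ^ 266 * K = d ^ 2 * g ^ 89 * ((g * s ^ 2) ^ 133 * K) := by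
          rw [mul_pow g, ← pow_mul]; ring
      _ ≤ _ := this
      _ = _ := by rw [mul_pow d, mul_pow g]; ring
  have b2 : (d * m) ^ 2 * (g * s') ^ 89 ≤ K * (N * F) * N ^ 89 :=
    mul_le_mul h2 a2 (pow_nonneg (mul_nonneg gp.le hs') _) (le_trans (sq_nonneg _) h2)
  have b3 : g ^ 222 * d ^ 2 * s ^ 266 * K ≤ K * (N * F) * N ^ 89 * s ^ 176 :=
    b1.trans (mul_le_mul_of_nonneg_right b2 (by positivity))
  have b4 : (g ^ 222 * d ^ 2 * s ^ 90) * (s ^ 176 * K) ≤ (F * N ^ 90) * (s ^ 176 * K) := by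
    calc _ = g ^ 222 * d ^ 2 * s ^ 266 * K := by
          rw [show 266 = 90 + 176 from rfl, pow_add s]; ring
      _ ≤ _ := b3
      _ = _ := by rw [show 90 = 89 + 1 from rfl, pow_succ N]; ring
  have b5 := le_of_mul_le_mul_right b4 (by positivity)
  have b6 : (g ^ 222 * d ^ 92) * N ^ 90 ≤ F * N ^ 90 := by
    refine le_trans ?_ b5
    have := mul_le_mul_of_nonneg_left a3 (show 0 ≤ g ^ 222 * d ^ 2 by positivity)
    refine le_trans (le_of_eq ?_) this
    rw [mul_pow d, show 92 = 2 + 90 from rfl, pow_add d]; ring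
  exact le_of_mul_le_mul_right b6 (by positivity)

lemma ff_sq_le {ρ : Matrix (Fin n → ZMod 2) (Fin n → ZMod 2) ℂ} (hρ : ρ.PosSemidef)
    (h1 : ρ.trace = 1) (x : PhaseSpace n) : ff ρ x ^ 2 ≤ 1 := by
  have h := Q1 hρ h1 {x}
  simp only [Finset.sum_singleton, sympl_self, ps_add_self, sg_zero, ff_zero h1] at h
  nlinarith [sq_nonneg (ff ρ x)]

lemma main_bound {ρ : Matrix (Fin n → ZMod 2) (Fin n → ZMod 2) ℂ} (hρ : ρ.PosSemidef)
    (h1 : ρ.trace = 1) {γ : ℝ} (hγ : 0 < γ) (h : γ ≤ 4 ^ n * ∑ x, (pFun ρ x) ^ 3) :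
    γ ≤ 1 ∧ (γ ^ 2 / 8) ^ 222 * (γ / 2) ^ 92 ≤ stabFidelity ρ := by
  classical
  set N : ℝ := 2 ^ n with hN
  have hNp : 0 < N := by positivity
  set F : PhaseSpace n → ℝ := fun x => ff ρ x ^ 2 with hF
  have F0 : ∀ x, 0 ≤ F x := fun x => sq_nonneg _
  have F1 : ∀ x, F x ≤ 1 := fun x => ff_sq_le hρ h1 x
  have FN : ∑ x, F x ≤ N := Q2 hρ h1
  have h6 : γ * N ≤ ∑ x, F x ^ 3 := by
    have e : (4 : ℝ) ^ n * ∑ x, (pFun ρ x) ^ 3 = (∑ x, F x ^ 3) / N := by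
      have : ∀ x, pFun ρ x ^ 3 = F x ^ 3 / N ^ 3 := fun x => by
        have : pFun ρ x = F x / N := rfl
        rw [this, div_pow]
      simp only [this]
      rw [← Finset.sum_div, show (4 : ℝ) ^ n = N * N by rw [hN, ← mul_pow]; norm_num]
      field_simp
    rw [e, le_div_iff₀ hNp] at h
    exact h
  have F3 : ∀ x, F x ^ 3 ≤ F x := fun x => by
    have := F0 x; have := F1 x
    calc F x ^ 3 ≤ F x ^ 1 := pow_le_pow_of_le_one (F0 x) (F1 x) (by norm_num)
      _ = F x := pow_one _
  have hγ1 : γ ≤ 1 := by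
    have : γ * N ≤ 1 * N := by
      rw [one_mul]; exact h6.trans ((Finset.sum_le_sum fun x _ => F3 x).trans FN)
    exact le_of_mul_le_mul_right this hNp
  refine ⟨hγ1, ?_⟩
  set S : Finset (PhaseSpace n) := Finset.univ.filter (fun x => γ / 2 ≤ F x) with hS
  set S' : Finset (PhaseSpace n) := Finset.univ.filter (fun x => γ ^ 2 / 8 ≤ F x) with hS'
  set P0 : Finset (PhaseSpace n × PhaseSpace n) :=
    (S ×ˢ S).filter (fun w => γ ^ 2 / 8 ≤ F (w.1 + w.2)) with hP0
  have c5 : γ / 2 * N ≤ (S.card : ℝ) := by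
    have : ∀ x, F x ^ 3 ≤ (if γ / 2 ≤ F x then 1 else 0) + γ / 2 * F x := fun x => by
      split_ifs with hx
      · have := F3 x; have := F1 x; have := mul_nonneg (by positivity : 0 ≤ γ / 2) (F0 x); linarith
      · push Not at hx
        have a := F0 x; have b := F1 x
        have : F x ^ 3 = F x * (F x * F x) := by ring
        have c : F x * F x ≤ γ / 2 := by nlinarith
        nlinarith
    have h7 := h6.trans (Finset.sum_le_sum fun x _ => this x)
    rw [Finset.sum_add_distrib, ← Finset.mul_sum, ← Finset.sum_filter, Finset.sum_const,
      nsmul_eq_mul, mul_one] at h7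
    have := mul_le_mul_of_nonneg_left FN (by positivity : 0 ≤ γ / 2)
    linarith
  have c4 : γ ^ 2 / 8 * (S'.card : ℝ) ≤ N := by
    refine le_trans ?_ FN
    have : ∑ x ∈ S', F x ≤ ∑ x, F x :=
      Finset.sum_le_sum_of_subset_of_nonneg (Finset.subset_univ _) fun x _ _ => F0 x
    refine le_trans ?_ this
    rw [mul_comm, ← nsmul_eq_mul]
    exact Finset.card_nsmul_le_sum _ _ _ fun x hx => (Finset.mem_filter.1 hx).2
  have c3 : γ ^ 2 / 8 * (S.card : ℝ) ^ 2 ≤ (P0.card : ℝ) := by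
    have q := Q1 hρ h1 S
    have q1 : γ / 2 * (S.card : ℝ) ≤ ∑ x ∈ S, F x := by
      rw [mul_comm, ← nsmul_eq_mul]
      exact Finset.card_nsmul_le_sum _ _ _ fun x hx => (Finset.mem_filter.1 hx).2
    have q2 : (γ / 2 * (S.card : ℝ)) ^ 2 ≤ (∑ x ∈ S, F x) ^ 2 :=
      pow_le_pow_left₀ (by positivity) q1 2
    have q3 : ∑ x ∈ S, ∑ y ∈ S, sg (sympl x y) * ff ρ (x + y) ^ 2 ≤
        ∑ w ∈ S ×ˢ S, ((if γ ^ 2 / 8 ≤ F (w.1 + w.2) then 1 else 0) + γ ^ 2 / 8) := by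
      rw [Finset.sum_product]
      refine Finset.sum_le_sum fun x _ => Finset.sum_le_sum fun y _ => ?_
      have a1 : sg (sympl x y) * F (x + y) ≤ F (x + y) := by
        have := sg_le (sympl x y); have := F0 (x + y); nlinarith
      refine a1.trans ?_
      have : 0 < γ ^ 2 / 8 := by positivity
      split_ifs with hx
      · have := F1 (x + y); linarith
      · push Not at hx
        simp only at hx
        linarith
    rw [Finset.sum_add_distrib, ← Finset.sum_filter, Finset.sum_const, Finset.sum_const,
      nsmul_eq_mul, nsmul_eq_mul, mul_one, Finset.card_product] at q3
    push_cast at q3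
    have q4 := (q2.trans q).trans q3
    rw [← hP0] at q4
    nlinarith
  have hne : P0.Nonempty := by
    rw [← Finset.card_pos]
    have : (0 : ℝ) < (P0.card : ℝ) := by
      refine lt_of_lt_of_le ?_ c3
      have : (0 : ℝ) < S.card := lt_of_lt_of_le (by positivity) c5
      positivity
    exact_mod_cast this
  obtain ⟨H, z, hH⟩ := pfr_comb (G := PhaseSpace n) ps_add_self S S' P0 (fun w hw => by
    rw [hP0, Finset.mem_filter, Finset.mem_product] at hw
    exact ⟨hw.1.1, hw.1.2, Finset.mem_filter.2 ⟨Finset.mem_univ _, hw.2⟩⟩) hne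
  have c2 := fid_coset hρ h1 H z
  have hDm : γ / 2 * ((S.filter (fun x => x - z ∈ H)).card : ℝ) ≤
      ∑ x with x - z ∈ H, ff ρ x ^ 2 := by
    have : ∑ x ∈ S.filter (fun x => x - z ∈ H), F x ≤ ∑ x with x - z ∈ H, F x :=
      Finset.sum_le_sum_of_subset_of_nonneg (fun x hx => by
        rw [Finset.mem_filter] at hx; simp [hx.2]) fun x _ _ => F0 x
    refine le_trans ?_ this
    rw [mul_comm, ← nsmul_eq_mul]
    exact Finset.card_nsmul_le_sum _ _ _ fun x hx =>
      (Finset.mem_filter.1 (Finset.mem_filter.1 hx).1).2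
  have hK : (0 : ℝ) < ((Finset.univ.filter (fun g => g ∈ H)).card : ℕ) := by
    exact_mod_cast cardH_pos H
  exact final_real hK (Nat.cast_nonneg _) (Nat.cast_nonneg _) hNp hγ hH
    ((pow_le_pow_left₀ (by positivity) hDm 2).trans c2) c3 c4 c5

end final
end part8

/-- There is a universal constant c > 0 such that for every n-qubit
mixed state ρ and γ > 0: if 4^n ∑_x p_ρ(x)³ ≥ γ then F(ρ) ≥ c γ^{1089}. -/
theorem soundness :
    ∃ c : ℝ, 0 < c ∧
      ∀ (n : ℕ) (ρ : Matrix (Fin n → ZMod 2) (Fin n → ZMod 2) ℂ),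
        ρ.PosSemidef → ρ.trace = 1 →
        ∀ γ : ℝ, 0 < γ →
        γ ≤ 4 ^ n * ∑ x, (pFun ρ x) ^ 3 →
        c * γ ^ 1089 ≤ stabFidelity ρ := by
  refine ⟨(1 / 8) ^ 222 * (1 / 2) ^ 92, by positivity, fun n ρ hρ h1 γ hγ h => ?_⟩
  obtain ⟨hγ1, hb⟩ := main_bound hρ h1 hγ h
  refine le_trans ?_ hb
  have e : (γ ^ 2 / 8) ^ 222 * (γ / 2) ^ 92 = (1 / 8) ^ 222 * (1 / 2) ^ 92 * γ ^ 536 := by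
    rw [div_eq_mul_one_div (γ ^ 2), div_eq_mul_one_div γ 2, mul_pow (γ ^ 2), mul_pow γ, ← pow_mul,
      show 536 = 2 * 222 + 92 from rfl, pow_add γ]
    ring
  rw [e]
  exact mul_le_mul_of_nonneg_left (pow_le_pow_of_le_one hγ.le hγ1 (by norm_num))
    (mul_nonneg (pow_nonneg (by norm_num) _) (pow_nonneg (by norm_num) _))
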